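/- Let π be an irreducible pair on a finite alphabet A with N = #A, and let Ē(π) = {ρ₁∘ρ₀⁻¹ : ρ ∈ E(π)} ⊆ Sym({1,…,N}) be the non-labeled extended Rauzy class of π. If Λ(π) is simple, then 2·#E(π) = N!·#Ē(π); if Λ(π) is not simple, then #E(π) = N!·#Ē(π). -/

import Mathlib

open Equiv

/-- A (labeled) pair on alphabet `A`: two bijections from `A` to positions.
Positions are `Fin (Fintype.card A)`, 0-indexed: position `j : Fin N`
corresponds to the position `j+1 ∈ {1,…,N}` of the paper. -/
abbrev RPair (A : Type*) [Fintype A] := Bool → (A ≃ Fin (Fintype.card A))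

variable {A : Type*} [Fintype A]

/-- Irreducibility: `π₁(π₀⁻¹({1,…,k})) = {1,…,k}` only for `k = N`. -/
def PairIrreducible (π : RPair A) : Prop :=
  ∀ k : Fin (Fintype.card A),
    (∀ x : A, π false x ≤ k → π true x ≤ k) → (k : ℕ) + 1 = Fintype.card A

/-- Type-ε right Rauzy induction sends `π` to `π'`.  Here `zc = π_ε⁻¹(N)` and
`zo = π_{1-ε}⁻¹(N)` are characterized as the letters of maximal position. -/
def RightMove (π π' : RPair A) : Prop :=
  ∃ ε : Bool, ∃ zc zo : A,
    (∀ x : A, π ε x ≤ π ε zc) ∧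
    (∀ x : A, π (!ε) x ≤ π (!ε) zo) ∧
    π' ε = π ε ∧
    (∀ b : A, π (!ε) b ≤ π (!ε) zc → π' (!ε) b = π (!ε) b) ∧
    ((π' (!ε) zo : ℕ) = (π (!ε) zc : ℕ) + 1) ∧
    (∀ b : A, ¬ π (!ε) b ≤ π (!ε) zc → b ≠ zo → (π' (!ε) b : ℕ) = (π (!ε) b : ℕ) + 1)

/-- Type-ε left Rauzy induction sends `π` to `π'`.  Here `ac = π_ε⁻¹(1)` and
`ao = π_{1-ε}⁻¹(1)` are characterized as the letters of minimal position. -/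
def LeftMove (π π' : RPair A) : Prop :=
  ∃ ε : Bool, ∃ ac ao : A,
    (∀ x : A, π ε ac ≤ π ε x) ∧
    (∀ x : A, π (!ε) ao ≤ π (!ε) x) ∧
    π' ε = π ε ∧
    (∀ b : A, π (!ε) ac ≤ π (!ε) b → π' (!ε) b = π (!ε) b) ∧
    ((π' (!ε) ao : ℕ) = (π (!ε) ac : ℕ) - 1) ∧
    (∀ b : A, ¬ π (!ε) ac ≤ π (!ε) b → b ≠ ao → (π' (!ε) b : ℕ) = (π (!ε) b : ℕ) - 1)

/-- The Rauzy class `R(π)`: pairs reachable by right Rauzy inductions. -/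
def RClass (π : RPair A) : Set (RPair A) := {ρ | Relation.ReflTransGen RightMove π ρ}

/-- The extended Rauzy class `E(π)`: pairs reachable by left and right Rauzy inductions. -/
def EClass (π : RPair A) : Set (RPair A) :=
  {ρ | Relation.ReflTransGen (fun x y => RightMove x y ∨ LeftMove x y) π ρ}

/-- `π ∘ ν = (π₀ ∘ ν, π₁ ∘ ν)`. -/
def pairRename (π : RPair A) (ν : Equiv.Perm A) : RPair A := fun ε => ν.trans (π ε)

/-- The renaming set `G(π) = {ν : π ∘ ν ∈ E(π)}`. -/
def renamings (π : RPair A) : Set (Equiv.Perm A) := {ν | pairRename π ν ∈ EClass π}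

/-- The non-labeled permutation `π₁ ∘ π₀⁻¹`. -/
def nonlabeled (π : RPair A) : Equiv.Perm (Fin (Fintype.card A)) :=
  (π false).symm.trans (π true)

/-- The position `1` (smallest). -/
def posFirst (A : Type*) [Fintype A] [Nonempty A] : Fin (Fintype.card A) :=
  ⟨0, Fintype.card_pos⟩

/-- The position `N` (largest). -/
def posLast (A : Type*) [Fintype A] [Nonempty A] : Fin (Fintype.card A) :=
  ⟨Fintype.card A - 1, Nat.sub_lt Fintype.card_pos Nat.one_pos⟩

/-- A pair is standard if `π₀(π₁⁻¹(1)) = π₁(π₀⁻¹(1)) = N`. -/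
def PairStandard [Nonempty A] (π : RPair A) : Prop :=
  π false ((π true).symm (posFirst A)) = posLast A ∧
  π true ((π false).symm (posFirst A)) = posLast A

/-- `S` is the permutation `S(π)` of the paper. -/
def IsS [Nonempty A] (π : RPair A) (S : Equiv.Perm A) : Prop :=
  ∀ b : A,
    (π true b = posFirst A → S b = (π false).symm (posFirst A)) ∧
    (π true b ≠ posFirst A →
      (((π true b : ℕ) = (π true ((π false).symm (posLast A)) : ℕ) + 1 →
        (π false (S b) : ℕ) = (π false ((π true).symm (posLast A)) : ℕ) + 1) ∧
      ((π true b : ℕ) ≠ (π true ((π false).symm (posLast A)) : ℕ) + 1 →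
        (π false (S b) : ℕ) =
          (π false ((π true).symm
            ⟨(π true b : ℕ) - 1,
              Nat.lt_of_le_of_lt (Nat.sub_le _ _) (π true b).isLt⟩) : ℕ) + 1)))

/-- The marked letter `X(π) = π₀⁻¹(1)`. -/
def XOf [Nonempty A] (π : RPair A) : A := (π false).symm (posFirst A)

/-- `Q` is the permutation `Q(π)` of the paper (constructed from `S = S(π)`). -/
def IsQ [Nonempty A] (π : RPair A) (S Q : Equiv.Perm A) : Prop :=
  Q (XOf π) = XOf π ∧
  ∀ b : A, b ≠ XOf π →
    (S b = XOf π → Q b = S (S b)) ∧ (S b ≠ XOf π → Q b = S b)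

/-- `Λ`: the multiset of cardinalities of the orbits of `Q` on `A ∖ {X}`
(for `Q` fixing `X`): the nontrivial cycle lengths of `Q` together with one `1`
for each fixed point of `Q` other than `X`. -/
def lamOf [DecidableEq A] (Q : Equiv.Perm A) : Multiset ℕ :=
  Q.cycleType + Multiset.replicate ((Finset.univ.filter fun a => Q a = a).card - 1) 1

/-- The centralizer `Z(π)` of `(X(π), Q(π))`. -/
def ZOf [Nonempty A] (π : RPair A) (Q : Equiv.Perm A) : Set (Equiv.Perm A) :=
  {ν | ν (XOf π) = XOf π ∧ ν⁻¹ * Q * ν = Q}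

namespace RZ
section LemD
open LinearMap

lemma det_ofCase1 {V : Type*} [AddCommGroup V] [Module ℚ V] [FiniteDimensional ℚ V]
    (u : V) (f : V →ₗ[ℚ] ℚ) (hf : f u = 0) :
    LinearMap.det (LinearMap.transvection f u) = 1 := by
  rw [LinearMap.transvection.det, hf, add_zero]

/-- symplectic transvection is an isometry -/
lemma trans_isom {V : Type*} [AddCommGroup V] [Module ℚ V]
    (ω : V →ₗ[ℚ] V →ₗ[ℚ] ℚ) (hω : ∀ x, ω x x = 0) (u : V) (c : ℚ) (x y : V) :
    ω (LinearMap.transvection (c • ω u) u x) (LinearMap.transvection (c • ω u) u y) = ω x y := by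
  have hs : ∀ x y, ω x y = - ω y x := by
    intro x y
    have := hω (x + y)
    simp only [map_add, LinearMap.add_apply, hω] at this
    linarith
  simp only [LinearMap.transvection.apply, map_add, map_smul, LinearMap.add_apply,
    LinearMap.smul_apply, smul_eq_mul, hω]
  rw [hs x u]
  ring

lemma lemD_nondeg {V : Type*} [AddCommGroup V] [Module ℚ V] [FiniteDimensional ℚ V]
    (ω : V →ₗ[ℚ] V →ₗ[ℚ] ℚ) (hω : ∀ x, ω x x = 0) (hnd : ∀ x, (∀ y, ω x y = 0) → x = 0) :
    ∀ n : ℕ, ∀ M : V →ₗ[ℚ] V, (∀ x y, ω (M x) (M y) = ω x y) →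
      Module.finrank ℚ V ≤ n + Module.finrank ℚ (LinearMap.ker (M - LinearMap.id)) →
      LinearMap.det M = 1 := by
  have hs : ∀ x y, ω x y = - ω y x := by
    intro x y
    have := hω (x + y)
    simp only [map_add, LinearMap.add_apply, hω] at this
    linarith
  intro n
  induction n with
  | zero =>
    intro M hM hr
    have : LinearMap.ker (M - LinearMap.id) = ⊤ := by
      apply Submodule.eq_top_of_finrank_eq
      apply le_antisymm (Submodule.finrank_le _)
      omega
    have hMid : M = LinearMap.id := by
      rw [LinearMap.ker_eq_top] at this
      exact sub_eq_zero.mp this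
    rw [hMid, LinearMap.det_id]
  | succ n ih =>
    intro M hM hr
    have case1 : ∀ M : V →ₗ[ℚ] V, (∀ x y, ω (M x) (M y) = ω x y) →
      Module.finrank ℚ V ≤ (n+1) + Module.finrank ℚ (LinearMap.ker (M - LinearMap.id)) →
      (∃ x, ω x (M x) ≠ 0) → LinearMap.det M = 1 := by
      intro M hM hr ⟨x, hx⟩
      set u := M x - x with hu
      set T := LinearMap.transvection ((ω x (M x))⁻¹ • ω u) u with hT
      have hdT : LinearMap.det T = 1 := det_ofCase1 _ _ (by simp [hω])
      have h1 : LinearMap.det (T ∘ₗ M) = 1 := by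
        apply ih
        · intro a b
          simp only [LinearMap.comp_apply, hT]
          rw [trans_isom ω hω, hM]
        · have hlt : LinearMap.ker (M - LinearMap.id) < LinearMap.ker (T ∘ₗ M - LinearMap.id) := by
            rw [SetLike.lt_iff_le_and_exists]
            refine ⟨?_, x, ?_, ?_⟩
            · intro a ha
              simp only [LinearMap.mem_ker, LinearMap.sub_apply, LinearMap.id_apply,
                LinearMap.comp_apply, sub_eq_zero] at ha ⊢
              rw [ha, hT, LinearMap.transvection.apply]
              have : ω u a = 0 := by
                rw [hu, map_sub, LinearMap.sub_apply]
                conv_lhs => enter [1, 2]; rw [← ha]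
                rw [hM, sub_self]
              simp [this]
            · simp only [LinearMap.mem_ker, LinearMap.sub_apply, LinearMap.id_apply,
                LinearMap.comp_apply, sub_eq_zero]
              rw [hT, LinearMap.transvection.apply]
              have : ω u (M x) = - ω x (M x) := by
                rw [hu, map_sub, LinearMap.sub_apply, hω, zero_sub]
              simp only [LinearMap.smul_apply, smul_eq_mul, this]
              rw [mul_neg, inv_mul_cancel₀ hx, hu]
              simp
            · simp only [LinearMap.mem_ker, LinearMap.sub_apply, LinearMap.id_apply, sub_eq_zero]
              intro h
              rw [h, hω] at hx
              exact hx rfl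
          have := Submodule.finrank_lt_finrank_of_lt hlt
          omega
      rw [LinearMap.det_comp, hdT, one_mul] at h1
      exact h1
    by_cases hc : ∃ x, ω x (M x) ≠ 0
    · exact case1 M hM hr hc
    · push Not at hc
      by_cases hid : ∃ x, M x ≠ x
      · obtain ⟨x, hx⟩ := hid
        set u := M x - x with hu
        have hu0 : u ≠ 0 := sub_ne_zero.mpr hx
        have hex : ∃ y, ω u y ≠ 0 := by
          by_contra h
          push Not at h
          exact hu0 (hnd u h)
        obtain ⟨y, hy⟩ := hex
        have hpol : ∀ a b, ω a (M b) = - ω b (M a) := by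
          intro a b
          have := hc (a + b)
          simp only [map_add, LinearMap.add_apply, hc] at this
          linarith
        have hneg : ∀ y, ω u (M y) = - ω u y := by
          intro y
          rw [hu]
          simp only [map_sub, LinearMap.sub_apply, hM]
          rw [hpol x y, hs y (M x)]
          ring
        set T := LinearMap.transvection ((1:ℚ) • ω u) u with hT
        have hdT : LinearMap.det T = 1 := det_ofCase1 _ _ (by simp [hω])
        have h1 : LinearMap.det (T ∘ₗ M) = 1 := by
          apply case1
          · intro a b
            simp only [LinearMap.comp_apply, hT]
            rw [trans_isom ω hω, hM]
          · have hle : LinearMap.ker (M - LinearMap.id) ≤ LinearMap.ker (T ∘ₗ M - LinearMap.id) := by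
              intro a ha
              simp only [LinearMap.mem_ker, LinearMap.sub_apply, LinearMap.id_apply,
                LinearMap.comp_apply, sub_eq_zero] at ha ⊢
              rw [ha, hT, LinearMap.transvection.apply]
              have : ω u a = 0 := by
                rw [hu, map_sub, LinearMap.sub_apply]
                conv_lhs => enter [1, 2]; rw [← ha]
                rw [hM, sub_self]
              simp [this]
            have := Submodule.finrank_mono hle
            omega
          · refine ⟨y, ?_⟩
            rw [LinearMap.comp_apply, hT, LinearMap.transvection.apply, map_add, hc]
            simp only [LinearMap.smul_apply, map_smul, smul_eq_mul, hneg, one_mul, zero_add]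
            rw [hs y u]
            simpa using hy
        rw [LinearMap.det_comp, hdT, one_mul] at h1
        exact h1
      · push Not at hid
        have : M = LinearMap.id := LinearMap.ext hid
        rw [this, LinearMap.det_id]

/-- Isometries of an alternating form that fix the radical pointwise have determinant one. -/
lemma lemD {V : Type*} [AddCommGroup V] [Module ℚ V] [FiniteDimensional ℚ V]
    (ω : V →ₗ[ℚ] V →ₗ[ℚ] ℚ) (hω : ∀ x, ω x x = 0)
    (M : V →ₗ[ℚ] V) (hM : ∀ x y, ω (M x) (M y) = ω x y)
    (hK : ∀ x, (∀ y, ω x y = 0) → M x = x) : LinearMap.det M = 1 := by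
  have hs : ∀ x y, ω x y = - ω y x := by
    intro x y
    have := hω (x + y)
    simp only [map_add, LinearMap.add_apply, hω] at this
    linarith
  set K := LinearMap.ker ω with hKd
  have hmem : ∀ x, x ∈ K ↔ ∀ y, ω x y = 0 := by
    intro x
    rw [hKd, LinearMap.mem_ker]
    constructor
    · intro h y; rw [h]; rfl
    · intro h; ext y; simpa using h y
  have he : K ≤ K.comap M := by
    intro x hx
    rw [Submodule.mem_comap, hK x ((hmem x).1 hx)]
    exact hx
  rw [LinearMap.det_eq_det_mul_det K M he]
  have h1 : M.restrict he = LinearMap.id := by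
    ext x
    simp [LinearMap.restrict_apply, hK x.1 ((hmem _).1 x.2)]
  rw [h1, LinearMap.det_id, one_mul]
  -- induced form
  let ω1 : (V ⧸ K) →ₗ[ℚ] V →ₗ[ℚ] ℚ := K.liftQ ω (le_refl _)
  have hω1 : ∀ x y, ω1 (K.mkQ x) y = ω x y := by
    intro x y; simp [ω1]
  let ω2 : (V ⧸ K) →ₗ[ℚ] (V ⧸ K) →ₗ[ℚ] ℚ :=
    (K.liftQ ω1.flip (by
      intro y hy
      rw [LinearMap.mem_ker]
      ext x
      simp only [LinearMap.flip_apply, LinearMap.comp_apply, hω1, LinearMap.zero_apply]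
      rw [hs, (hmem y).1 hy, neg_zero])).flip
  have hω2 : ∀ x y, ω2 (K.mkQ x) (K.mkQ y) = ω x y := by
    intro x y
    simp only [ω2, LinearMap.flip_apply]
    simp [ω1]
  have hsurj := Submodule.mkQ_surjective K
  apply lemD_nondeg ω2 _ _ (Module.finrank ℚ (V ⧸ K)) _ _ (Nat.le_add_right _ _)
  · intro x; obtain ⟨x, rfl⟩ := hsurj x; rw [hω2, hω]
  · intro x hx; obtain ⟨x, rfl⟩ := hsurj x
    have : x ∈ K := by
      rw [hmem]; intro y; rw [← hω2, hx]
    simpa using this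
  · intro x y; obtain ⟨x, rfl⟩ := hsurj x; obtain ⟨y, rfl⟩ := hsurj y
    have hq : ∀ x, K.mapQ K M he (K.mkQ x) = K.mkQ (M x) := fun x => by simp
    rw [hq, hq, hω2, hω2, hM]
end LemD
end RZ

namespace RZ
open Relation
set_option linter.unusedSectionVars false

section Lists
variable {L : Type*} [DecidableEq L]

inductive Step : List L × List L → List L × List L → Prop
  | r0 (P : List L) (z : L) (R T : List L) (y : L) :
      Step (P ++ [z], R ++ z :: (T ++ [y])) (P ++ [z], R ++ z :: y :: T)
  | r1 (P : List L) (z : L) (R T : List L) (y : L) :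
      Step (R ++ z :: (T ++ [y]), P ++ [z]) (R ++ z :: y :: T, P ++ [z])
  | l0 (a : L) (P : List L) (y : L) (T R : List L) :
      Step (a :: P, y :: (T ++ a :: R)) (a :: P, T ++ y :: a :: R)
  | l1 (a : L) (P : List L) (y : L) (T R : List L) :
      Step (y :: (T ++ a :: R), a :: P) (T ++ y :: a :: R, a :: P)

def Reach (p q : List L × List L) : Prop := ReflTransGen Step p q

lemma Step.swap {p q : List L × List L} (h : Step p q) : Step p.swap q.swap := by
  cases h with
  | r0 P z R T y => exact Step.r1 P z R T y
  | r1 P z R T y => exact Step.r0 P z R T y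
  | l0 a P y T R => exact Step.l1 a P y T R
  | l1 a P y T R => exact Step.l0 a P y T R

lemma Reach.swap {p q : List L × List L} (h : Reach p q) : Reach p.swap q.swap := by
  unfold Reach at *
  induction h with
  | refl => exact .refl
  | tail _ h ih => exact ih.tail h.swap

lemma Reach.trans {p q r : List L × List L} (h : Reach p q) (h2 : Reach q r) : Reach p r :=
  ReflTransGen.trans h h2

lemma Reach.refl (p : List L × List L) : Reach p p := ReflTransGen.refl

lemma reach_r0_rot (P : List L) (z : L) (R : List L) :
    ∀ (n : ℕ) (T : List L), Reach (P ++ [z], R ++ z :: T.rotate n) (P ++ [z], R ++ z :: T) := by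
  intro n
  induction n with
  | zero => intro T; simpa using Reach.refl _
  | succ n ih =>
    intro T
    rcases T with _ | ⟨y, T⟩
    · simpa using Reach.refl _
    · rw [List.rotate_cons_succ]
      exact (ih _).trans (ReflTransGen.single (Step.r0 P z R T y))

lemma reach_l0_rot (a : L) (P R : List L) :
    ∀ (n : ℕ) (T : List L), Reach (a :: P, T ++ a :: R) (a :: P, T.rotate n ++ a :: R) := by
  intro n
  induction n with
  | zero => intro T; simpa using Reach.refl _
  | succ n ih =>
    intro T
    rcases T with _ | ⟨y, T⟩
    · simpa using Reach.refl _
    · rw [List.rotate_cons_succ]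
      refine Reach.trans (ReflTransGen.single ?_) (ih _)
      have := Step.l0 a P y T R
      simpa using this

lemma reach_r0 (P : List L) (z : L) (R : List L) {T T' : List L} (h : T ~r T') :
    Reach (P ++ [z], R ++ z :: T) (P ++ [z], R ++ z :: T') := by
  obtain ⟨n, rfl⟩ := h.symm
  exact reach_r0_rot P z R n T'

lemma reach_r1 (P : List L) (z : L) (R : List L) {T T' : List L} (h : T ~r T') :
    Reach (R ++ z :: T, P ++ [z]) (R ++ z :: T', P ++ [z]) :=
  (reach_r0 P z R h).swap

lemma reach_l0 (a : L) (P R : List L) {T T' : List L} (h : T ~r T') :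
    Reach (a :: P, T ++ a :: R) (a :: P, T' ++ a :: R) := by
  obtain ⟨n, rfl⟩ := h
  exact reach_l0_rot a P R n T

lemma reach_l1 (a : L) (P R : List L) {T T' : List L} (h : T ~r T') :
    Reach (T ++ a :: R, a :: P) (T' ++ a :: R, a :: P) :=
  (reach_l0 a P R h).swap

lemma rot_one (y : L) (T : List L) : (y :: T) ~r (T ++ [y]) := ⟨1, by simp⟩

lemma Step.reach_symm {p q : List L × List L} (h : Step p q) : Reach q p := by
  cases h with
  | r0 P z R T y => exact reach_r0 P z R (rot_one y T)
  | r1 P z R T y => exact reach_r1 P z R (rot_one y T)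
  | l0 a P y T R => 
    have := reach_l0 a P R (rot_one y T).symm
    simpa using this
  | l1 a P y T R =>
    have := reach_l1 a P R (rot_one y T).symm
    simpa using this

lemma Reach.symm {p q : List L × List L} (h : Reach p q) : Reach q p := by
  unfold Reach at h
  induction h with
  | refl => exact .refl _
  | tail _ h ih => exact h.reach_symm.trans ih

def mp (σ : L → L) (p : List L × List L) : List L × List L := (p.1.map σ, p.2.map σ)

lemma Step.map (σ : L → L) {p q : List L × List L} (h : Step p q) : Step (mp σ p) (mp σ q) := by
  cases h with
  | r0 P z R T y => simpa [mp] using Step.r0 (P.map σ) (σ z) (R.map σ) (T.map σ) (σ y)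
  | r1 P z R T y => simpa [mp] using Step.r1 (P.map σ) (σ z) (R.map σ) (T.map σ) (σ y)
  | l0 a P y T R => simpa [mp] using Step.l0 (σ a) (P.map σ) (σ y) (T.map σ) (R.map σ)
  | l1 a P y T R => simpa [mp] using Step.l1 (σ a) (P.map σ) (σ y) (T.map σ) (R.map σ)

lemma Reach.map (σ : L → L) {p q : List L × List L} (h : Reach p q) :
    Reach (mp σ p) (mp σ q) := by
  unfold Reach at *
  induction h with
  | refl => exact .refl
  | tail _ h ih => exact ih.tail (h.map σ)

lemma mp_mp (σ τ : L → L) (p : List L × List L) : mp σ (mp τ p) = mp (σ ∘ τ) p := by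
  simp [mp]

lemma mp_id (p : List L × List L) : mp id p = p := by
  simp [mp]

/-- lists enumerating the alphabet without repetition -/
def Full (l : List L) : Prop := l.Nodup ∧ ∀ a, a ∈ l

def Valid (p : List L × List L) : Prop := Full p.1 ∧ Full p.2

lemma Full.perm {l l' : List L} (h : Full l) (hp : l.Perm l') : Full l' :=
  ⟨hp.nodup_iff.1 h.1, fun a => hp.mem_iff.1 (h.2 a)⟩

lemma Valid.swap {p : List L × List L} (h : Valid p) : Valid p.swap := ⟨h.2, h.1⟩

lemma Step.perm {p q : List L × List L} (h : Step p q) : p.1.Perm q.1 ∧ p.2.Perm q.2 := by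
  have hr : ∀ (z : L) (R T : List L) (y : L), (R ++ z :: (T ++ [y])).Perm (R ++ z :: y :: T) := by
    intro z R T y
    exact (List.Perm.cons _ (List.perm_append_singleton y T)).append_left R
  have hl : ∀ (a y : L) (T R : List L), (y :: (T ++ a :: R)).Perm (T ++ y :: a :: R) := by
    intro a y T R
    exact List.perm_middle.symm
  cases h with
  | r0 P z R T y => exact ⟨.refl _, hr _ _ _ _⟩
  | r1 P z R T y => exact ⟨hr _ _ _ _, .refl _⟩
  | l0 a P y T R => exact ⟨.refl _, hl _ _ _ _⟩
  | l1 a P y T R => exact ⟨hl _ _ _ _, .refl _⟩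

lemma Step.valid {p q : List L × List L} (h : Step p q) (hp : Valid p) : Valid q :=
  ⟨hp.1.perm h.perm.1, hp.2.perm h.perm.2⟩

lemma Reach.valid {p q : List L × List L} (h : Reach p q) (hp : Valid p) : Valid q := by
  unfold Reach at h
  induction h with
  | refl => exact hp
  | tail _ h ih => exact h.valid ih

/-! ### successor map -/

def nxt (l : List L) : Option L → Option L
  | none => l.head?
  | some a => l[l.idxOf a + 1]?

lemma nxt_none (l : List L) : nxt l none = l.head? := rfl

lemma nxt_mid {u v : List L} {a : L} (ha : a ∉ u) : nxt (u ++ a :: v) (some a) = v.head? := by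
  have : (u ++ a :: v).idxOf a = u.length := by
    rw [List.idxOf_append_of_notMem ha]; simp
  rw [nxt, this, List.getElem?_append_right (by omega)]
  simp [List.head?_eq_getElem?]

def Ch {X : Type*} (g h : Option L → X) : Option L → List L → Option L → Prop
  | x, [], e => g x = h e
  | x, a :: l, e => g x = h (some a) ∧ Ch g h (some a) l e

lemma Ch_append {X : Type*} (g h : Option L → X) (l1 : List L) (a : L) (l2 : List L) :
    ∀ x e, Ch g h x (l1 ++ a :: l2) e ↔ Ch g h x l1 (some a) ∧ Ch g h (some a) l2 e := by
  induction l1 with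
  | nil => intro x e; simp [Ch]
  | cons b l1 ih => intro x e; simp [Ch, ih, and_assoc]

lemma Ch_congr {X : Type*} {g h g' h' : Option L → X} (l : List L) :
    ∀ {x e e'}, g' x = g x → (∀ a ∈ l, g' (some a) = g (some a)) →
      (∀ a ∈ l, h' (some a) = h (some a)) → h' e' = h e → Ch g h x l e → Ch g' h' x l e' := by
  induction l with
  | nil => intro x e e' h1 _ _ h2 h3; simp only [Ch] at *; rw [h1, h2, h3]
  | cons b l ih =>
    intro x e e' h1 h2 h3 h4 h5
    simp only [Ch] at *
    refine ⟨?_, ih ?_ ?_ ?_ h4 h5.2⟩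
    · rw [h1, h3 b (by simp), h5.1]
    · exact h2 b (by simp)
    · intro a ha; exact h2 a (by simp [ha])
    · intro a ha; exact h3 a (by simp [ha])

lemma Ch_nxt_aux {X : Type*} (g h : Option L → X) (v : List L) :
    ∀ (u : List L) (b : L), (u ++ b :: v).Nodup → (Ch g h (some b) v none ↔
      ∀ a ∈ b :: v, g (some a) = h (nxt (u ++ b :: v) (some a))) := by
  induction v with
  | nil =>
    intro u b hn
    have hb : b ∉ u := by
      intro hb; rw [List.nodup_append] at hn; exact hn.2.2 b hb b (by simp) rfl
    simp [Ch, nxt_mid hb]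
  | cons c v ih =>
    intro u b hn
    have hb : b ∉ u := by
      intro hb; rw [List.nodup_append] at hn; exact hn.2.2 b hb b (by simp) rfl
    have := ih (u ++ [b]) c (by simpa using hn)
    simp only [Ch]
    rw [this]
    rw [List.forall_mem_cons (a := b), nxt_mid hb]
    simp

lemma Ch_nxt {X : Type*} (g h : Option L → X) {l : List L} (hl : Full l) :
    (∀ α, g α = h (nxt l α)) ↔ Ch g h none l none := by
  obtain ⟨hn, hm⟩ := hl
  rcases l with _ | ⟨c, v⟩
  · constructor
    · intro H; exact H none
    · intro H α
      rcases α with _ | a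
      · exact H
      · exact absurd (hm a) (by simp)
  · have := Ch_nxt_aux g h v [] c (by simpa using hn)
    simp only [Ch]
    rw [this]
    constructor
    · intro H; exact ⟨H none, fun a _ => H (some a)⟩
    · rintro ⟨H1, H2⟩ α
      rcases α with _ | a
      · exact H1
      · exact H2 a (hm a)

def Adm {X : Type*} (p : List L × List L) (h : Option L → X) : Prop :=
  ∀ α, h (nxt p.1 α) = h (nxt p.2 α)

def Vt (p : List L × List L) (x y : Option L) : Prop :=
  ∀ h : Option L → Prop, Adm p h → h x = h y

lemma Adm.swap {X : Type*} {p : List L × List L} {h : Option L → X} (H : Adm p h) :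
    Adm p.swap h := fun α => (H α).symm

lemma Vt_swap (p : List L × List L) (x y : Option L) : Vt p.swap x y ↔ Vt p x y :=
  ⟨fun H h ha => H h ha.swap, fun H h ha => H h ha.swap⟩

lemma Vt.refl (p : List L × List L) (x : Option L) : Vt p x x := fun _ _ => rfl
lemma Vt.symm {p : List L × List L} {x y : Option L} (h : Vt p x y) : Vt p y x :=
  fun f hf => (h f hf).symm
lemma Vt.trans {p : List L × List L} {x y z : Option L} (h : Vt p x y) (h2 : Vt p y z) :
    Vt p x z := fun f hf => (h f hf).trans (h2 f hf)
lemma Vt.nxt (p : List L × List L) (α : Option L) : Vt p (nxt p.1 α) (nxt p.2 α) :=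
  fun _ hf => hf α

lemma Vt.eq {X : Type*} {p : List L × List L} {x y : Option L} (H : Vt p x y)
    {h : Option L → X} (hh : Adm p h) : h x = h y := by
  have := H (fun z => h z = h x) (fun α => by
    show (h _ = h x) = (h _ = h x)
    rw [hh α])
  simp only [eq_iff_iff, true_iff] at this
  exact this.symm

lemma Adm_iff_Ch {X : Type*} {p : List L × List L} (hp : Valid p) (h : Option L → X) :
    Adm p h ↔ Ch (fun α => h (nxt p.1 α)) h none p.2 none := by
  rw [← Ch_nxt _ _ hp.2]; rfl

/-! facts about nxt -/

lemma nxt_last {P : List L} {z : L} (hn : (P ++ [z]).Nodup) : nxt (P ++ [z]) (some z) = none := by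
  have : z ∉ P := by
    intro hb; rw [List.nodup_append] at hn; exact hn.2.2 z hb z (by simp) rfl
  rw [nxt_mid this]; rfl

lemma nxt_ne_none {P : List L} {z : L} (hf : Full (P ++ [z])) {α : Option L} (hα : α ≠ some z) :
    nxt (P ++ [z]) α ≠ none := by
  rcases α with _ | a
  · simp [nxt]
  · have hm := hf.2 a
    have haz : a ≠ z := fun h => hα (by rw [h])
    have : a ∈ P := by simpa [haz] using hm
    obtain ⟨u, v, rfl⟩ := List.append_of_mem this
    have hu : a ∉ u := by
      have := hf.1
      simp only [List.append_assoc, List.cons_append] at this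
      rw [List.nodup_append] at this
      intro h
      exact this.2.2 a h a (by simp) rfl
    rw [List.append_assoc, List.cons_append, nxt_mid hu]
    cases v <;> simp

lemma nxt_ne_head {P : List L} {a : L} (hf : (a :: P).Nodup) {b : L} (hb : b ∈ a :: P) :
    nxt (a :: P) (some b) ≠ some a := by
  obtain ⟨u, v, h⟩ := List.append_of_mem hb
  rw [h] at hf ⊢
  have hu : b ∉ u := by
      rw [List.nodup_append] at hf
      intro h
      exact hf.2.2 b h b (by simp) rfl
  rw [nxt_mid hu]
  intro hv
  have hav : a ∈ v := List.mem_of_mem_head? hv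
  rcases u with _ | ⟨c, u⟩
  · simp only [List.nil_append, List.cons.injEq] at h
    rw [h.1] at hav
    simp at hf
    exact hf.1 hav
  · simp only [List.cons_append, List.cons.injEq] at h
    rw [← h.1] at hf
    simp only [List.cons_append, List.nodup_cons] at hf
    exact hf.1 (by simp [hav])
end Lists
end RZ

namespace RZ
open Relation
set_option linter.unusedSectionVars false
set_option linter.unusedSimpArgs false
set_option linter.unusedVariables false

section Lists
variable {L : Type*} [DecidableEq L]

lemma notMem_of_nodup {u v : List L} {a : L} (hn : (u ++ a :: v).Nodup) : a ∉ u ∧ a ∉ v := by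
  rw [List.nodup_append] at hn
  exact ⟨fun h => hn.2.2 a h a (by simp) rfl, (List.nodup_cons.1 hn.2.1).1⟩

lemma adm_r0 {X : Type*} {P : List L} {z : L} {R T : List L} {y : L}
    (hp : Valid (P ++ [z], R ++ z :: (T ++ [y]))) {h : Option L → X}
    (H : Adm (P ++ [z], R ++ z :: (T ++ [y])) h) :
    Adm (P ++ [z], R ++ z :: y :: T) (fun α => if α = none then h (some y) else h α) := by
  have hq := (Step.r0 P z R T y).valid hp
  rcases T with _ | ⟨c, T⟩
  · intro α
    have H' := H α
    have hz : h none = h (some y) := by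
      have := H (some z)
      simp only at this
      rw [nxt_last hp.1.1, nxt_mid (notMem_of_nodup hp.2.1).1] at this
      simpa using this
    have hh : (fun α => if α = none then h (some y) else h α) = h := by
      funext α
      by_cases hα : α = none
      · simp [hα, hz]
      · simp [hα]
    rw [hh]
    exact H'
  rw [Adm_iff_Ch hp] at H
  rw [Adm_iff_Ch hq]
  simp only [Ch_append, Ch] at H ⊢
  obtain ⟨H1, ⟨H2, H3⟩, H4⟩ := H
  have hlast : nxt (P ++ [z]) (some z) = none := nxt_last hp.1.1
  have hne : ∀ α, α ≠ some z → nxt (P ++ [z]) α ≠ none := fun α => nxt_ne_none hp.1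
  have hnd := hp.2.1
  have hzR : z ∉ R := (notMem_of_nodup hnd).1
  have hzT : z ∉ c :: T ++ [y] := (notMem_of_nodup hnd).2
  simp only [List.cons_append, List.mem_cons, List.mem_append, List.not_mem_nil, or_false,
    not_or] at hzT
  have hg : ∀ a, a ≠ z → (if nxt (P ++ [z]) (some a) = none then h (some y)
      else h (nxt (P ++ [z]) (some a))) = h (nxt (P ++ [z]) (some a)) := by
    intro a ha
    rw [if_neg (hne _ (by simpa using ha))]
  refine ⟨Ch_congr R ?_ ?_ ?_ ?_ H1, ?_, ?_, Ch_congr T ?_ ?_ ?_ ?_ H3⟩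
  · rw [if_neg (hne _ (by simp))]
  · intro a ha; apply hg; rintro rfl; exact hzR ha
  · intro a ha; simp
  · simp
  · simp [hlast]
  · rw [hg _ (Ne.symm hzT.2.2), H4]; simp only [hlast] at H2; simpa using H2
  · exact hg _ (Ne.symm hzT.1)
  · intro a ha; apply hg; rintro rfl; exact hzT.2.1 ha
  · intro a ha; simp
  · simp

lemma adm_r0_inv {X : Type*} {P : List L} {z : L} {R T : List L} {y : L}
    (hp : Valid (P ++ [z], R ++ z :: (T ++ [y]))) {h : Option L → X}
    (H : Adm (P ++ [z], R ++ z :: y :: T) h) :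
    Adm (P ++ [z], R ++ z :: (T ++ [y]))
      (fun α => if α = none then h (nxt (P ++ [z]) (some y)) else h α) := by
  have hq := (Step.r0 P z R T y).valid hp
  have hne : ∀ α, α ≠ some z → nxt (P ++ [z]) α ≠ none := fun α => nxt_ne_none hp.1
  rcases T with _ | ⟨c, T⟩
  · intro α
    have H' := H α
    have hnd := hq.2.1
    have hz : h none = h (nxt (P ++ [z]) (some y)) := by
      have := H (some y)
      simp only at this
      have e : R ++ [z, y] = (R ++ [z]) ++ [y] := by simp
      rw [e] at this hnd
      rw [nxt_last hnd] at this
      exact this.symm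
    have hh : (fun α => if α = none then h (nxt (P ++ [z]) (some y)) else h α) = h := by
      funext α
      by_cases hα : α = none
      · simp [hα, hz]
      · simp [hα]
    rw [hh]
    exact H'
  rw [Adm_iff_Ch hq] at H
  rw [Adm_iff_Ch hp]
  simp only [Ch_append, Ch] at H ⊢
  obtain ⟨H1, H2, H3, H4⟩ := H
  have hlast : nxt (P ++ [z]) (some z) = none := nxt_last hp.1.1
  have hnd := hp.2.1
  have hzR : z ∉ R := (notMem_of_nodup hnd).1
  have hzT : z ∉ c :: T ++ [y] := (notMem_of_nodup hnd).2
  simp only [List.cons_append, List.mem_cons, List.mem_append, List.not_mem_nil, or_false,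
    not_or] at hzT
  have hg : ∀ a, a ≠ z → (if nxt (P ++ [z]) (some a) = none then h (nxt (P ++ [z]) (some y))
      else h (nxt (P ++ [z]) (some a))) = h (nxt (P ++ [z]) (some a)) := by
    intro a ha
    rw [if_neg (hne _ (by simpa using ha))]
  refine ⟨Ch_congr R ?_ ?_ ?_ ?_ H1, ⟨?_, Ch_congr T ?_ ?_ ?_ ?_ H4⟩, ?_⟩
  · rw [if_neg (hne _ (by simp))]
  · intro a ha; apply hg; rintro rfl; exact hzR ha
  · intro a ha; simp
  · simp
  · simp [hlast, H3]
  · exact hg _ (Ne.symm hzT.1)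
  · intro a ha; apply hg; rintro rfl; exact hzT.2.1 ha
  · intro a ha; simp
  · simp only [hlast] at H2; simp [H2]
  · rw [hg _ (Ne.symm hzT.2.2)]; simp

lemma adm_l0 {X : Type*} {a : L} {P : List L} {y : L} {T R : List L}
    (hp : Valid (a :: P, y :: (T ++ a :: R))) {h : Option L → X}
    (H : Adm (a :: P, y :: (T ++ a :: R)) h) :
    Adm (a :: P, T ++ y :: a :: R)
      (fun α => if α = some a then h (nxt (y :: (T ++ a :: R)) (some y)) else h α) := by
  have hq := (Step.l0 a P y T R).valid hp
  have hny : nxt (y :: (T ++ a :: R)) (some y) = (T ++ a :: R).head? :=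
    nxt_mid (u := []) (by simp)
  rw [hny]
  rw [Adm_iff_Ch hp] at H
  rw [Adm_iff_Ch hq]
  have hne : ∀ b, nxt (a :: P) (some b) ≠ some a := fun b => nxt_ne_head hp.1.1 (hp.1.2 b)
  have h0 : nxt (a :: P) none = some a := rfl
  have hnd := hp.2.1
  simp only [List.nodup_cons, List.mem_append, List.mem_cons, not_or] at hnd
  have hya : y ≠ a := hnd.1.2.1
  have haT : a ∉ T := (notMem_of_nodup hnd.2).1
  have haR : a ∉ R := (notMem_of_nodup hnd.2).2
  have hR : ∀ b ∈ R, b ≠ a := by rintro b hb rfl; exact haR hb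
  rcases T with _ | ⟨c, T⟩
  · simp only [List.nil_append, Ch] at H ⊢
    simp only [h0, List.head?_cons] at H ⊢
    simp only [if_neg (hne _)]
    obtain ⟨H1, H2, H3⟩ := H
    refine ⟨?_, ?_, Ch_congr R ?_ ?_ ?_ ?_ H3⟩
    · simp [hya, H1]
    · simp [H2]
    · simp [hne]
    · simp [hne]
    · intro b hb; simp [hR b hb]
    · simp [hne]
  · simp only [List.cons_append, Ch] at H ⊢
    rw [Ch_append] at H ⊢
    simp only [Ch] at H ⊢
    simp only [h0, List.head?_cons] at H ⊢
    simp only [if_neg (hne _)]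
    obtain ⟨H1, H2, H3, H4⟩ := H
    simp only [List.mem_cons, not_or] at haT
    refine ⟨?_, Ch_congr T ?_ ?_ ?_ ?_ H3, ?_, Ch_congr R ?_ ?_ ?_ ?_ H4⟩
    · simp [Ne.symm haT.1]
    · simp [hne]
    · simp [hne]
    · intro b hb; rw [if_neg]; rintro h; simp only [Option.some.injEq] at h; rw [h] at hb; exact haT.2 hb
    · simp [hya, H1]
    · simp [H2]
    · simp [hne]
    · simp [hne]
    · intro b hb; simp [hR b hb]
    · simp [hne]

lemma adm_l0_inv {X : Type*} {a : L} {P : List L} {y : L} {T R : List L}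
    (hp : Valid (a :: P, y :: (T ++ a :: R))) {h : Option L → X}
    (H : Adm (a :: P, T ++ y :: a :: R) h) :
    Adm (a :: P, y :: (T ++ a :: R))
      (fun α => if α = some a then h (some y) else h α) := by
  have hq := (Step.l0 a P y T R).valid hp
  rw [Adm_iff_Ch hq] at H
  rw [Adm_iff_Ch hp]
  have hne : ∀ b, nxt (a :: P) (some b) ≠ some a := fun b => nxt_ne_head hp.1.1 (hp.1.2 b)
  have h0 : nxt (a :: P) none = some a := rfl
  have hnd := hp.2.1
  simp only [List.nodup_cons, List.mem_append, List.mem_cons, not_or] at hnd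
  have hya : y ≠ a := hnd.1.2.1
  have haT : a ∉ T := (notMem_of_nodup hnd.2).1
  have haR : a ∉ R := (notMem_of_nodup hnd.2).2
  have hR : ∀ b ∈ R, b ≠ a := by rintro b hb rfl; exact haR hb
  rcases T with _ | ⟨c, T⟩
  · simp only [List.nil_append, Ch] at H ⊢
    simp only [h0] at H ⊢
    simp only [if_neg (hne _)]
    obtain ⟨H1, H2, H3⟩ := H
    refine ⟨?_, ?_, Ch_congr R ?_ ?_ ?_ ?_ H3⟩
    · simp [hya]
    · simp [H2, H1]
    · simp [hne]
    · simp [hne]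
    · intro b hb; simp [hR b hb]
    · simp [hne]
  · simp only [List.cons_append, Ch] at H ⊢
    rw [Ch_append] at H ⊢
    simp only [Ch] at H ⊢
    simp only [h0] at H ⊢
    simp only [if_neg (hne _)]
    obtain ⟨H1, H2, H3, H4⟩ := H
    simp only [List.mem_cons, not_or] at haT
    refine ⟨?_, ?_, Ch_congr T ?_ ?_ ?_ ?_ H2, Ch_congr R ?_ ?_ ?_ ?_ H4⟩
    · simp [hya]
    · simp [Ne.symm haT.1, H3, H1]
    · simp [hne]
    · simp [hne]
    · intro b hb; rw [if_neg]; rintro h; simp only [Option.some.injEq] at h; rw [h] at hb; exact haT.2 hb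
    · simp [hne]
    · simp [hne]
    · simp [hne]
    · intro b hb; simp [hR b hb]
    · simp [hne]

lemma Vt_r0 {P : List L} {z : L} {R T : List L} {y : L}
    (hp : Valid (P ++ [z], R ++ z :: (T ++ [y]))) (a b : L) :
    Vt (P ++ [z], R ++ z :: y :: T) (some a) (some b) ↔
      Vt (P ++ [z], R ++ z :: (T ++ [y])) (some a) (some b) := by
  constructor
  · intro H h hh
    have := H _ (adm_r0 hp hh)
    simpa using this
  · intro H h hh
    have := H _ (adm_r0_inv hp hh)
    simpa using this

lemma Vt_r0_none {P : List L} {z : L} {R T : List L} {y : L}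
    (hp : Valid (P ++ [z], R ++ z :: (T ++ [y]))) :
    Vt (P ++ [z], R ++ z :: y :: T) none (some y) := by
  have := Vt.nxt (P ++ [z], R ++ z :: y :: T) (some z)
  simp only at this
  rw [nxt_last hp.1.1, nxt_mid (notMem_of_nodup hp.2.1).1] at this
  simpa using this

lemma Vt_r0_none' {P : List L} {z : L} {R T : List L} {y : L}
    (hp : Valid (P ++ [z], R ++ z :: (T ++ [y]))) :
    Vt (P ++ [z], R ++ z :: (T ++ [y])) none (nxt (P ++ [z]) (some y)) := by
  have := Vt.nxt (P ++ [z], R ++ z :: (T ++ [y])) (some y)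
  simp only at this
  have e : R ++ z :: (T ++ [y]) = (R ++ z :: T) ++ [y] := by simp
  have hnd := hp.2.1
  simp only at hnd
  rw [e] at this hnd ⊢
  rw [nxt_last hnd] at this
  exact this.symm

lemma Vt_l0 {a : L} {P : List L} {y : L} {T R : List L}
    (hp : Valid (a :: P, y :: (T ++ a :: R))) {x x' : Option L}
    (hx : x ≠ some a) (hx' : x' ≠ some a) :
    Vt (a :: P, T ++ y :: a :: R) x x' ↔ Vt (a :: P, y :: (T ++ a :: R)) x x' := by
  constructor
  · intro H h hh
    have := H _ (adm_l0 hp hh)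
    simpa [hx, hx'] using this
  · intro H h hh
    have := H _ (adm_l0_inv hp hh)
    simpa [hx, hx'] using this

lemma Vt_l0_a {a : L} {P : List L} {y : L} {T R : List L}
    (hp : Valid (a :: P, y :: (T ++ a :: R))) :
    Vt (a :: P, T ++ y :: a :: R) (some a) (nxt (T ++ [a]) none) := by
  have := Vt.nxt (a :: P, T ++ y :: a :: R) none
  simp only [nxt] at this ⊢
  rcases T with _ | ⟨c, T⟩
  · exact Vt.refl _ _
  · exact this

lemma Vt_l0_ay {a : L} {P : List L} {y : L} {T R : List L}
    (hp : Valid (a :: P, y :: (T ++ a :: R))) :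
    Vt (a :: P, y :: (T ++ a :: R)) (some a) (some y) :=
  Vt.nxt (a :: P, y :: (T ++ a :: R)) none

/-- number of letters other than the first top letter in the class of `x` -/
noncomputable def len (p : List L × List L) (x : Option L) : ℕ :=
  {b : L | some b ≠ nxt p.1 none ∧ Vt p x (some b)}.ncard

lemma Vt.len_eq {p : List L × List L} {x y : Option L} (h : Vt p x y) : len p x = len p y := by
  unfold len
  congr 1
  ext b
  simp only [Set.mem_ofPred_eq]
  exact and_congr_right fun _ => ⟨fun h2 => h.symm.trans h2, fun h2 => h.trans h2⟩

lemma len_add [Fintype L] {p : List L × List L} {a : L} (ha : nxt p.1 none = some a)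
    (x : Option L) [Decidable (Vt p x (some a))] :
    len p x + (if Vt p x (some a) then 1 else 0) = {b : L | Vt p x (some b)}.ncard := by
  unfold len
  rw [ha]
  have e : {b : L | some b ≠ some a ∧ Vt p x (some b)} = {b : L | Vt p x (some b)} \ {a} := by
    ext b; simp [and_comm]
  rw [e]
  split_ifs with h
  · exact Set.ncard_sdiff_singleton_add_one h (Set.toFinite _)
  · rw [Set.sdiff_singleton_eq_self (by simpa using h)]; rfl

lemma len_swap [Fintype L] (p : List L × List L) (hp : Valid p) (x : Option L) :
    len p.swap x = len p x := by
  classical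
  rcases h1 : p.1 with _ | ⟨a, l1⟩
  · have : IsEmpty L := ⟨fun a => by have := hp.1.2 a; rw [h1] at this; simp at this⟩
    unfold len
    congr 1
    ext b; exact this.elim b
  rcases h2 : p.2 with _ | ⟨b, l2⟩
  · have := hp.2.2 a; rw [h2] at this; simp at this
  have ha : nxt p.1 none = some a := by rw [h1]; rfl
  have hb : nxt p.2 none = some b := by rw [h2]; rfl
  have e1 := len_add ha x
  have e2 := len_add (p := p.swap) hb x
  have hab : Vt p (some a) (some b) := by rw [← ha, ← hb]; exact Vt.nxt p none
  simp only [Vt_swap] at e2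
  have : Vt p x (some a) ↔ Vt p x (some b) := ⟨fun h => h.trans hab, fun h => h.trans hab.symm⟩
  simp only [this] at e1
  omega

lemma len_r0 {P : List L} {z : L} {R T : List L} {y : L}
    (hp : Valid (P ++ [z], R ++ z :: (T ++ [y]))) (a : L) :
    len (P ++ [z], R ++ z :: y :: T) (some a) = len (P ++ [z], R ++ z :: (T ++ [y])) (some a) := by
  unfold len
  congr 1
  ext b
  simp only [Set.mem_ofPred_eq, Vt_r0 hp]

lemma len_l0 {a : L} {P : List L} {y : L} {T R : List L}
    (hp : Valid (a :: P, y :: (T ++ a :: R))) {x : Option L} (hx : x ≠ some a) :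
    len (a :: P, T ++ y :: a :: R) x = len (a :: P, y :: (T ++ a :: R)) x := by
  unfold len
  congr 1
  ext b
  simp only [Set.mem_ofPred_eq, nxt, List.head?_cons]
  exact and_congr_right fun h => Vt_l0 hp hx h

lemma adm_len (p : List L × List L) {X : Type*} (f : ℕ → X) : Adm p (fun α => f (len p α)) := by
  intro α
  show f _ = f _
  rw [(Vt.nxt p α).len_eq]
end Lists
end RZ

namespace RZ
open Relation
set_option linter.unusedSectionVars false
set_option linter.unusedSimpArgs false
set_option linter.unusedVariables false

section Forms
variable {L : Type*} [DecidableEq L]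

def sm (l : List L) (x : L → ℚ) : ℚ := (l.map x).sum

def FF : List L → (L → ℚ) → (L → ℚ) → ℚ
  | [], _, _ => 0
  | a :: l, x, y => x a * sm l y + FF l x y

lemma sm_nil (x : L → ℚ) : sm [] x = 0 := rfl
lemma sm_cons (a : L) (l : List L) (x : L → ℚ) : sm (a :: l) x = x a + sm l x := by simp [sm]
lemma sm_append (l l' : List L) (x : L → ℚ) : sm (l ++ l') x = sm l x + sm l' x := by simp [sm]
lemma sm_add (l : List L) (x y : L → ℚ) : sm l (x + y) = sm l x + sm l y := by
  induction l with
  | nil => simp [sm]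
  | cons a l ih => simp only [sm_cons, ih, Pi.add_apply]; ring
lemma sm_smul (l : List L) (c : ℚ) (x : L → ℚ) : sm l (c • x) = c * sm l x := by
  induction l with
  | nil => simp [sm]
  | cons a l ih => simp only [sm_cons, ih, Pi.smul_apply, smul_eq_mul]; ring
lemma sm_congr {l : List L} {x y : L → ℚ} (h : ∀ a ∈ l, x a = y a) : sm l x = sm l y := by
  unfold sm; rw [List.map_congr_left h]
lemma sm_perm {l l' : List L} (h : l.Perm l') (x : L → ℚ) : sm l x = sm l' x :=
  (h.map x).sum_eq
lemma sm_map (σ : L → L) (l : List L) (x : L → ℚ) : sm (l.map σ) x = sm l (x ∘ σ) := by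
  simp [sm]

lemma FF_append (l l' : List L) (x y : L → ℚ) :
    FF (l ++ l') x y = FF l x y + FF l' x y + sm l x * sm l' y := by
  induction l with
  | nil => simp [FF, sm]
  | cons a l ih => simp only [List.cons_append, FF, ih, sm_append, sm_cons]; ring

lemma FF_congr {l : List L} {x y x' y' : L → ℚ} (h : ∀ a ∈ l, x a = x' a)
    (h' : ∀ a ∈ l, y a = y' a) : FF l x y = FF l x' y' := by
  induction l with
  | nil => rfl
  | cons a l ih =>
    simp only [FF]
    rw [h a (by simp), sm_congr (fun b hb => h' b (by simp [hb])),
      ih (fun b hb => h b (by simp [hb])) (fun b hb => h' b (by simp [hb]))]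

lemma FF_map (σ : L → L) (l : List L) (x y : L → ℚ) :
    FF (l.map σ) x y = FF l (x ∘ σ) (y ∘ σ) := by
  induction l with
  | nil => rfl
  | cons a l ih => simp only [List.map_cons, FF, ih, sm_map, Function.comp]

lemma FF_diag {l l' : List L} (h : l.Perm l') (x : L → ℚ) : FF l x x = FF l' x x := by
  have key : ∀ l : List L, 2 * FF l x x = sm l x ^ 2 - sm l (fun a => x a ^ 2) := by
    intro l
    induction l with
    | nil => simp [FF, sm]
    | cons a l ih => simp only [FF, sm_cons, mul_add, ih]; ring
  have h1 := key l
  have h2 := key l'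
  rw [sm_perm h, sm_perm h] at h1
  linarith

def FFl (l : List L) : (L → ℚ) →ₗ[ℚ] (L → ℚ) →ₗ[ℚ] ℚ :=
  LinearMap.mk₂ ℚ (FF l)
    (by intro x x' y; induction l with
      | nil => simp [FF]
      | cons a l ih => simp only [FF, ih, Pi.add_apply]; ring)
    (by intro c x y; induction l with
      | nil => simp [FF]
      | cons a l ih => simp only [FF, ih, Pi.smul_apply, smul_eq_mul]; ring)
    (by intro x y y'; induction l with
      | nil => simp [FF]
      | cons a l ih => simp only [FF, ih, sm_add]; ring)
    (by intro c x y; induction l with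
      | nil => simp [FF]
      | cons a l ih => simp only [FF, ih, sm_smul, smul_eq_mul]; ring)

def om (p : List L × List L) : (L → ℚ) →ₗ[ℚ] (L → ℚ) →ₗ[ℚ] ℚ := FFl p.1 - FFl p.2

lemma om_apply (p : List L × List L) (x y : L → ℚ) : om p x y = FF p.1 x y - FF p.2 x y := rfl

def dl (p : List L × List L) (h : Option L → ℚ) : L → ℚ :=
  fun a => h (nxt p.1 (some a)) - h (some a)

def hf (l : List L) (x : L → ℚ) : Option L → ℚ
  | none => sm l x
  | some b => FF l x (Pi.single b 1)

lemma sm_single {l : List L} {b : L} (hb : b ∉ l) : sm l (Pi.single b 1) = 0 := by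
  rw [sm_congr (y := fun _ => 0)]
  · simp [sm]
  · intro a ha
    rw [Pi.single_eq_of_ne]
    rintro rfl; exact hb ha

lemma FF_single {l : List L} {b : L} (hb : b ∉ l) (x : L → ℚ) : FF l x (Pi.single b 1) = 0 := by
  induction l with
  | nil => rfl
  | cons a l ih =>
    simp only [List.mem_cons, not_or] at hb
    simp [FF, ih hb.2, sm_single hb.2]

lemma hf_mid {u v : List L} {b : L} (hn : (u ++ b :: v).Nodup) (x : L → ℚ) :
    hf (u ++ b :: v) x (some b) = sm u x := by
  obtain ⟨h1, h2⟩ := notMem_of_nodup hn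
  simp [hf, FF_append, FF, FF_single h1, FF_single h2, sm_single h2, sm_cons]

lemma hf_nxt_none {l : List L} (hn : l.Nodup) (x : L → ℚ) : hf l x (nxt l none) = 0 := by
  rcases l with _ | ⟨a, l⟩
  · rfl
  · exact hf_mid (u := []) hn x

lemma hf_nxt_some {l : List L} (hn : Full l) (x : L → ℚ) (b : L) :
    hf l x (nxt l (some b)) = hf l x (some b) + x b := by
  obtain ⟨u, v, rfl⟩ := List.append_of_mem (hn.2 b)
  have hb := (notMem_of_nodup hn.1).1
  rw [hf_mid hn.1, nxt_mid hb]
  rcases v with _ | ⟨c, v⟩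
  · simp [hf, sm_append, sm_cons, sm_nil]
  · have := hf_mid (u := u ++ [b]) (b := c) (v := v) (by simpa using hn.1) x
    simp only [List.append_assoc, List.cons_append, List.nil_append] at this
    rw [List.head?_cons, this]
    simp [sm_append, sm_cons, sm_nil]

lemma full_perm {l l' : List L} (h : Full l) (h' : Full l') : l.Perm l' :=
  (List.perm_ext_iff_of_nodup h.1 h'.1).2 fun a => ⟨fun _ => h'.2 a, fun _ => h.2 a⟩

lemma ker_om {p : List L × List L} (hp : Valid p) {x : L → ℚ} (hx : ∀ y, om p x y = 0) :
    ∃ h : Option L → ℚ, Adm p h ∧ x = dl p h := by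
  have e : hf p.1 x = hf p.2 x := by
    funext α
    rcases α with _ | b
    · exact sm_perm (full_perm hp.1 hp.2) x
    · have := hx (Pi.single b 1)
      rw [om_apply] at this
      exact sub_eq_zero.1 this
  refine ⟨hf p.1 x, ?_, ?_⟩
  · intro α
    rcases α with _ | b
    · rw [hf_nxt_none hp.1.1, e, hf_nxt_none hp.2.1]
    · rw [hf_nxt_some hp.1, e, hf_nxt_some hp.2]
  · funext b
    rw [dl, hf_nxt_some hp.1]; ring

def JJ [Fintype L] (p q : List L × List L) : Prop :=
  ∃ B : (L → ℚ) →ₗ[ℚ] (L → ℚ), LinearMap.det B = 1 ∧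
    (∀ x y, om q (B x) (B y) = om p x y) ∧
    ∀ f : ℕ → ℚ, B (dl p (fun α => f (len p α))) = dl q (fun α => f (len q α))

/-- the elementary map `x ↦ x - x_y e_z` -/
def el (z y : L) : (L → ℚ) →ₗ[ℚ] (L → ℚ) :=
  LinearMap.transvection (-(LinearMap.proj y)) (Pi.single z 1)

lemma el_apply (z y : L) (x : L → ℚ) (a : L) :
    el z y x a = if a = z then x z - x y else x a := by
  unfold el
  rw [LinearMap.transvection.apply]
  by_cases h : a = z
  · subst h; simp; ring
  · simp [h, Pi.single_eq_of_ne h]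

lemma el_z (z y : L) (x : L → ℚ) : el z y x z = x z - x y := by simp [el_apply]
lemma el_ne {z y a : L} (h : a ≠ z) (x : L → ℚ) : el z y x a = x a := by simp [el_apply, h]

lemma el_det [Fintype L] {z y : L} (h : y ≠ z) : LinearMap.det (el z y) = 1 := by
  unfold el
  rw [LinearMap.transvection.det]
  simp [Pi.single_eq_of_ne h]

lemma sm_el {l : List L} {z y : L} (h : z ∉ l) (x : L → ℚ) : sm l (el z y x) = sm l x :=
  sm_congr fun a ha => el_ne (by rintro rfl; exact h ha) x
lemma FF_el {l : List L} {z y : L} (h : z ∉ l) (x x' : L → ℚ) :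
    FF l (el z y x) (el z y x') = FF l x x' :=
  FF_congr (fun a ha => el_ne (by rintro rfl; exact h ha) x)
    (fun a ha => el_ne (by rintro rfl; exact h ha) x')

lemma JJ_r0 [Fintype L] {P : List L} {z : L} {R T : List L} {y : L}
    (hp : Valid (P ++ [z], R ++ z :: (T ++ [y]))) :
    JJ (P ++ [z], R ++ z :: (T ++ [y])) (P ++ [z], R ++ z :: y :: T) := by
  have hzP : z ∉ P := (notMem_of_nodup hp.1.1).1
  obtain ⟨hzR, hzT⟩ := notMem_of_nodup hp.2.1
  simp only [List.mem_append, List.mem_singleton, not_or] at hzT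
  obtain ⟨hzT, hzy⟩ := hzT
  have hyz : y ≠ z := Ne.symm hzy
  refine ⟨el z y, el_det hyz, ?_, ?_⟩
  · intro x x'
    have hs : sm P x = sm R x + sm T x + x y := by
      have := sm_perm (full_perm hp.1 hp.2) x
      simp only [sm_append, sm_cons, sm_nil] at this
      linarith
    simp only [om_apply, FF_append, FF, sm_append, sm_cons, sm_nil, sm_el hzP, sm_el hzR,
      sm_el hzT, FF_el hzP, FF_el hzR, FF_el hzT, el_z, el_ne hyz, hs]
    ring
  · intro f
    funext a
    have hlast : nxt (P ++ [z]) (some z) = none := nxt_last hp.1.1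
    have h1 : len (P ++ [z], R ++ z :: y :: T) none
        = len (P ++ [z], R ++ z :: (T ++ [y])) (some y) := by
      rw [(Vt_r0_none hp).len_eq, len_r0 hp]
    have h2 := (Vt_r0_none' hp).len_eq
    by_cases ha : a = z
    · subst ha
      rw [el_z]
      simp only [dl, hlast, h1, len_r0 hp, h2]
      ring
    · rw [el_ne ha]
      have hne : nxt (P ++ [z]) (some a) ≠ none := nxt_ne_none hp.1 (by simpa using ha)
      obtain ⟨c, hc⟩ := Option.ne_none_iff_exists'.1 hne
      simp only [dl, hc, len_r0 hp]

lemma JJ_l0 [Fintype L] {a : L} {P : List L} {y : L} {T R : List L}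
    (hp : Valid (a :: P, y :: (T ++ a :: R))) :
    JJ (a :: P, y :: (T ++ a :: R)) (a :: P, T ++ y :: a :: R) := by
  have haP : a ∉ P := (List.nodup_cons.1 hp.1.1).1
  have h2 := hp.2.1
  simp only [List.nodup_cons, List.mem_append, List.mem_cons, not_or] at h2
  have hya : y ≠ a := h2.1.2.1
  obtain ⟨haT, haR⟩ := notMem_of_nodup h2.2
  refine ⟨el a y, el_det hya, ?_, ?_⟩
  · intro x x'
    have hs : sm P x' = sm R x' + sm T x' + x' y := by
      have := sm_perm (full_perm hp.1 hp.2) x'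
      simp only [sm_append, sm_cons, sm_nil] at this
      linarith
    simp only [om_apply, FF_append, FF, sm_append, sm_cons, sm_nil, sm_el haP, sm_el haR,
      sm_el haT, FF_el haP, FF_el haR, FF_el haT, el_z, el_ne hya, hs]
    ring
  · intro f
    funext b
    have hne : ∀ b, nxt (a :: P) (some b) ≠ some a := fun b => nxt_ne_head hp.1.1 (hp.1.2 b)
    have hny : nxt (y :: (T ++ a :: R)) (some y) = (T ++ a :: R).head? :=
      nxt_mid (u := []) (by simp)
    have e1 : len (a :: P, y :: (T ++ a :: R)) (some a)
      = len (a :: P, y :: (T ++ a :: R)) (some y) := (Vt_l0_ay hp).len_eq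
    have e2 : len (a :: P, y :: (T ++ a :: R)) (nxt (a :: P) (some y))
      = len (a :: P, y :: (T ++ a :: R)) (T ++ a :: R).head? := by
      have := (Vt.nxt (a :: P, y :: (T ++ a :: R)) (some y)).len_eq
      simp only at this
      rw [this, hny]
    have e3 : len (a :: P, T ++ y :: a :: R) (some a)
      = len (a :: P, y :: (T ++ a :: R)) (T ++ a :: R).head? := by
      rcases T with _ | ⟨c, T⟩
      · have : len (a :: P, y :: a :: R) (some a) = len (a :: P, y :: a :: R) (some y) := e1
        exact (Vt.nxt (a :: P, [] ++ y :: a :: R) none).len_eq.trans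
          ((len_l0 hp (by simpa [nxt] using hya)).trans e1.symm)
      · exact (Vt_l0_a hp).len_eq.trans (len_l0 hp (by
          simp only [List.mem_cons, not_or] at haT
          simpa [nxt] using Ne.symm haT.1))
    by_cases hb : b = a
    · subst hb
      rw [el_z]
      simp only [dl, len_l0 hp (hne _), e3, e1, e2]
      ring
    · rw [el_ne hb]
      simp only [dl, len_l0 hp (hne _)]
      rw [len_l0 hp (by simpa using hb)]

lemma dl_swap {p : List L × List L} {h : Option L → ℚ} (H : Adm p h) : dl p.swap h = dl p h := by
  funext a
  simp only [dl]
  rw [H]; rfl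

lemma JJ_swap [Fintype L] {p q : List L × List L} (hp : Valid p) (hq : Valid q)
    (h : JJ p.swap q.swap) : JJ p q := by
  obtain ⟨B, h1, h2, h3⟩ := h
  refine ⟨B, h1, ?_, ?_⟩
  · intro x y
    have := h2 x y
    simp only [om_apply, Prod.fst_swap, Prod.snd_swap] at this ⊢
    linarith
  · intro f
    have := h3 f
    simp only [len_swap p hp, len_swap q hq] at this
    rwa [dl_swap (adm_len p f), dl_swap (adm_len q f)] at this

lemma JJ_refl [Fintype L] (p : List L × List L) : JJ p p :=
  ⟨LinearMap.id, LinearMap.det_id, fun _ _ => rfl, fun _ => rfl⟩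

lemma JJ_trans [Fintype L] {p q r : List L × List L} (h : JJ p q) (h' : JJ q r) : JJ p r := by
  obtain ⟨B, h1, h2, h3⟩ := h
  obtain ⟨B', h1', h2', h3'⟩ := h'
  refine ⟨B' ∘ₗ B, by rw [LinearMap.det_comp, h1, h1', one_mul], ?_, ?_⟩
  · intro x y; simp only [LinearMap.comp_apply]; rw [h2', h2]
  · intro f; simp only [LinearMap.comp_apply]; rw [h3, h3']

lemma JJ_step [Fintype L] {p q : List L × List L} (hp : Valid p) (h : Step p q) : JJ p q := by
  have hq := h.valid hp
  cases h with
  | r0 P z R T y => exact JJ_r0 hp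
  | r1 P z R T y => exact JJ_swap hp hq (JJ_r0 hp.swap)
  | l0 a P y T R => exact JJ_l0 hp
  | l1 a P y T R => exact JJ_swap hp hq (JJ_l0 hp.swap)

lemma JJ_reach [Fintype L] {p q : List L × List L} (hp : Valid p) (h : Reach p q) : JJ p q := by
  unfold Reach at h
  induction h with
  | refl => exact JJ_refl p
  | tail h1 h2 ih => exact JJ_trans ih (JJ_step (Reach.valid h1 hp) h2)

/-! equivariance -/

lemma nxt_map (σ : Equiv.Perm L) (l : List L) (α : Option L) :
    nxt (l.map σ) (α.map σ) = (nxt l α).map σ := by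
  rcases α with _ | a
  · simp [nxt]
  · have : (l.map σ).idxOf (σ a) = l.idxOf a := by
      induction l with
      | nil => rfl
      | cons b l ih =>
        simp only [List.map_cons, List.idxOf_cons, ih]
        have h1 : (σ b == σ a) = (b == a) := by
          rw [Bool.eq_iff_iff, beq_iff_eq, beq_iff_eq]; exact σ.injective.eq_iff
        rw [h1]
    simp [nxt, this]

lemma Vt_map (σ : Equiv.Perm L) (p : List L × List L) (x y : Option L) (h : Vt p x y) :
    Vt (mp σ p) (x.map σ) (y.map σ) := by
  intro f hf
  refine h (fun α => f (α.map σ)) ?_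
  intro α
  have := hf (α.map σ)
  simp only [mp, nxt_map] at this
  exact this

lemma Vt_map_iff (σ : Equiv.Perm L) (p : List L × List L) (x y : Option L) :
    Vt (mp σ p) (x.map σ) (y.map σ) ↔ Vt p x y := by
  refine ⟨fun h => ?_, Vt_map σ p x y⟩
  have := Vt_map σ⁻¹ _ _ _ h
  rw [mp_mp] at this
  have e : (⇑σ⁻¹ ∘ ⇑σ) = id := by funext a; simp
  simpa [e, mp_id, Option.map_map] using this

lemma len_map (σ : Equiv.Perm L) (p : List L × List L) (x : Option L) :
    len (mp σ p) (x.map σ) = len p x := by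
  unfold len
  rw [← Set.ncard_image_of_injective {b : L | some b ≠ nxt p.1 none ∧ Vt p x (some b)} σ.injective]
  congr 1
  ext b
  simp only [Set.mem_ofPred_eq, Set.mem_image]
  have hn : nxt (mp σ p).1 none = (nxt p.1 none).map σ := nxt_map σ p.1 none
  constructor
  · rintro ⟨h1, h2⟩
    refine ⟨σ⁻¹ b, ⟨?_, ?_⟩, by simp⟩
    · intro h; apply h1; rw [hn, ← h]; simp
    · rw [← Vt_map_iff σ]; simpa using h2
  · rintro ⟨c, ⟨h1, h2⟩, rfl⟩
    refine ⟨?_, ?_⟩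
    · intro h; apply h1
      rw [hn] at h
      exact Option.map_injective σ.injective (by simpa using h)
    · exact Vt_map σ p x (some c) h2

def Simp (p : List L × List L) : Prop := ∀ x y : Option L, len p x = len p y → Vt p x y

lemma det_perm [Fintype L] (σ : Equiv.Perm L) :
    LinearMap.det (LinearMap.funLeft ℚ ℚ σ) = ((Equiv.Perm.sign σ : ℤ) : ℚ) := by
  have : LinearMap.funLeft ℚ ℚ σ = Matrix.toLin' (σ.permMatrix ℚ) := by
    ext x a
    simp [LinearMap.funLeft, Matrix.permMatrix_mulVec, Pi.single_apply]
  rw [this, LinearMap.det_toLin', Matrix.det_permutation]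

theorem part1 [Fintype L] {p : List L × List L} (hp : Valid p) (hs : Simp p) (σ : Equiv.Perm L)
    (h : Reach p (mp σ p)) : Equiv.Perm.sign σ = 1 := by
  obtain ⟨B, h1, h2, h3⟩ := JJ_reach hp h
  have key : LinearMap.det (LinearMap.funLeft ℚ ℚ σ ∘ₗ B) = 1 := by
    apply lemD (om p)
    · intro x; rw [om_apply, FF_diag (full_perm hp.1 hp.2), sub_self]
    · intro x y
      rw [← h2 x y]
      simp only [LinearMap.comp_apply, om_apply, mp, FF_map]
      rfl
    · intro x hx
      obtain ⟨g, hg, rfl⟩ := ker_om hp hx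
      have hfac : ∃ f : ℕ → ℚ, ∀ α, g α = f (len p α) := by
        have : Function.FactorsThrough g (len p) := fun x y hxy => (hs x y hxy).eq hg
        refine ⟨Function.extend (len p) g 0, fun α => (this.extend_apply 0 α).symm⟩
      obtain ⟨f, hf⟩ := hfac
      have : g = fun α => f (len p α) := funext hf
      rw [this, LinearMap.comp_apply, h3]
      funext a
      simp only [LinearMap.funLeft_apply, dl]
      have e1 := nxt_map σ p.1 (some a)
      have e2 := len_map σ p (some a)
      simp only [Option.map_some] at e1 e2
      rw [e2]
      show f (len _ (nxt (p.1.map σ) _)) - _ = _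
      rw [e1, len_map]
  rw [LinearMap.det_comp, h1, mul_one, det_perm] at key
  have : ((Equiv.Perm.sign σ : ℤ)) = 1 := by exact_mod_cast key
  exact Units.ext this
end Forms
end RZ

namespace RZ
open Relation
set_option linter.unusedSectionVars false
set_option linter.unusedSimpArgs false
set_option linter.unusedVariables false

section Std
variable {L : Type*} [DecidableEq L]

def Irr (p : List L × List L) : Prop :=
  ∀ u v u' v', p = (u ++ v, u' ++ v') → u.Perm u' → u = [] ∨ v = []

lemma Irr.swap {p : List L × List L} (hv : Valid p) (h : Irr p) : Irr p.swap := by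
  intro u v u' v' e hp
  have e' : p = (u' ++ v', u ++ v) := by
    rw [← Prod.swap_swap p, e]; rfl
  have hl := (full_perm hv.1 hv.2).length_eq
  rw [e'] at hl
  have hl2 := hp.length_eq
  simp only [List.length_append] at hl
  rcases h u' v' u v e' hp.symm with h1 | h1
  · left
    apply List.length_eq_zero_iff.1; rw [hl2, h1]; rfl
  · right
    apply List.length_eq_zero_iff.1
    rw [h1] at hl; simp at hl; omega

lemma irr_r0 {P : List L} {z : L} {R T : List L} {y : L}
    (hp : Valid (P ++ [z], R ++ z :: (T ++ [y])))
    (h : Irr (P ++ [z], R ++ z :: (T ++ [y]))) : Irr (P ++ [z], R ++ z :: y :: T) := by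
  intro u v u' v' e hu
  by_cases hv : v = []
  · exact Or.inr hv
  left
  rw [Prod.mk.injEq] at e
  obtain ⟨e1, e2⟩ := e
  obtain ⟨v0, x, rfl⟩ : ∃ v0 x, v = v0 ++ [x] := by
    rcases List.eq_nil_or_concat v with h | ⟨v0, x, h⟩
    · exact absurd h hv
    · exact ⟨v0, x, by simpa using h⟩
  have hPx : P = u ++ v0 ∧ z = x := by
    rw [← List.append_assoc] at e1
    simpa using List.append_inj' e1 rfl
  obtain ⟨rfl, rfl⟩ := hPx
  have hzu : z ∉ u' := by
    intro hz
    have hz := hu.mem_iff.2 hz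
    have := (notMem_of_nodup hp.1.1).1
    exact this (by simp [hz])
  rcases List.append_eq_append_iff.1 e2 with ⟨as, h1, h2⟩ | ⟨bs, h1, h2⟩
  · rcases as with _ | ⟨c, as⟩
    · simp at h1
      rcases h u (v0 ++ [z]) u' (z :: (T ++ [y])) (by simp [h1]) hu with h | h
      · exact h
      · simp at h
    · simp only [List.cons_append, List.cons.injEq] at h2
      rw [← h2.1] at h1
      exact absurd (by simp [h1]) hzu
  · rcases h u (v0 ++ [z]) u' (bs ++ z :: (T ++ [y])) (by simp [h1]) hu with h | h
    · exact h
    · simp at h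

lemma irr_l0 {a : L} {P : List L} {y : L} {T R : List L}
    (hp : Valid (a :: P, y :: (T ++ a :: R)))
    (h : Irr (a :: P, y :: (T ++ a :: R))) : Irr (a :: P, T ++ y :: a :: R) := by
  intro u v u' v' e hu
  rcases u with _ | ⟨b, u⟩
  · exact Or.inl rfl
  right
  rw [Prod.mk.injEq] at e
  obtain ⟨e1, e2⟩ := e
  simp only [List.cons_append, List.cons.injEq] at e1
  obtain ⟨rfl, rfl⟩ := e1
  have hau : a ∈ u' := hu.mem_iff.1 (by simp)
  obtain ⟨s, t, rfl⟩ := List.append_of_mem hau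
  have hq := ((Step.l0 a (u ++ v) y T R).valid hp).2.1
  have e3 : T ++ [y] ++ a :: R = s ++ a :: (t ++ v') := by simpa using e2
  have hst : T ++ [y] = s ∧ R = t ++ v' := by
    have hn : (T ++ [y] ++ a :: R).Nodup := by simpa using hq
    have h1 := (notMem_of_nodup hn)
    rw [e3] at hn
    have h2 := (notMem_of_nodup hn)
    rcases List.append_eq_append_iff.1 e3 with ⟨as, h3, h4⟩ | ⟨bs, h3, h4⟩
    · rcases as with _ | ⟨c, as⟩
      · simp at h3 h4; exact ⟨h3.symm, h4⟩
      · simp only [List.cons_append, List.cons.injEq] at h4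
        rw [h3, ← h4.1] at h2
        simp at h2
    · rcases bs with _ | ⟨c, as⟩
      · simp at h3 h4; exact ⟨h3, h4.symm⟩
      · simp only [List.cons_append, List.cons.injEq] at h4
        rw [h3, ← h4.1] at h1
        simp at h1
  obtain ⟨rfl, rfl⟩ := hst
  have := h (a :: u) v (y :: (T ++ a :: t)) v' (by simp) (hu.trans (by
    simp only [List.append_assoc, List.cons_append, List.nil_append]
    exact List.perm_middle))
  simpa using this

lemma Step.irr {p q : List L × List L} (h : Step p q) (hp : Valid p) (hi : Irr p) : Irr q := by
  have hq := h.valid hp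
  cases h with
  | r0 P z R T y => exact irr_r0 hp hi
  | r1 P z R T y => exact (irr_r0 hp.swap (hi.swap hp)).swap hq.swap
  | l0 a P y T R => exact irr_l0 hp hi
  | l1 a P y T R => exact (irr_l0 hp.swap (hi.swap hp)).swap hq.swap

lemma Reach.irr {p q : List L × List L} (h : Reach p q) (hp : Valid p) (hi : Irr p) : Irr q := by
  unfold Reach at h
  induction h with
  | refl => exact hi
  | tail h1 h2 ih => exact h2.irr (Reach.valid h1 hp) ih

lemma first_split (s : L → Prop) (l : List L) (h : ∃ a ∈ l, s a) :
    ∃ u a v, l = u ++ a :: v ∧ s a ∧ ∀ b ∈ u, ¬ s b := by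
  induction l with
  | nil => simp at h
  | cons c l ih =>
    by_cases hc : s c
    · exact ⟨[], c, l, rfl, hc, by simp⟩
    · obtain ⟨a, ha, hs⟩ := h
      have : a ∈ l := by
        rcases List.mem_cons.1 ha with rfl | h
        · exact absurd hs hc
        · exact h
      obtain ⟨u, b, v, h1, h2, h3⟩ := ih ⟨a, this, hs⟩
      refine ⟨c :: u, b, v, by simp [h1], h2, ?_⟩
      intro d hd
      rcases List.mem_cons.1 hd with rfl | h
      · exact hc
      · exact h3 d h

lemma rot_swap (u v : List L) : (u ++ v) ~r (v ++ u) := ⟨u.length, by simp⟩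

lemma rot_last {U : List L} {B : L} (h : B ∈ U) : ∃ U', U ~r (U' ++ [B]) := by
  obtain ⟨u, v, rfl⟩ := List.append_of_mem h
  refine ⟨v ++ u, ?_⟩
  have := rot_swap (u ++ [B]) v
  simpa using this

lemma rot_first {U : List L} {B : L} (h : B ∈ U) : ∃ U', U ~r (B :: U') := by
  obtain ⟨u, v, rfl⟩ := List.append_of_mem h
  exact ⟨v ++ u, rot_swap u (B :: v)⟩

lemma exists_std_aux : ∀ (n : ℕ) (P : List L) (z : L) (R T : List L), R.length ≤ n →
    Valid (P ++ [z], R ++ z :: T) → Irr (P ++ [z], R ++ z :: T) →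
    ∃ a U V, Reach (P ++ [z], R ++ z :: T) (a :: U, V ++ [a]) := by
  intro n
  induction n with
  | zero =>
    intro P z R T hR hv hi
    have hR : R = [] := List.length_eq_zero_iff.1 (by omega)
    subst hR
    rcases P with _ | ⟨a, P⟩
    · have : T = [] := by
        have := (full_perm hv.1 hv.2).length_eq
        simp at this
        exact this
      subst this
      exact ⟨z, [], [], Reach.refl _⟩
    · have haT : a ∈ T := by
        have h1 := hv.2.2 a
        have h2 := hv.1.1
        simp at h1 h2
        rcases h1 with h | h
        · exact absurd h h2.1.2
        · exact h
      obtain ⟨T', hT'⟩ := rot_last haT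
      exact ⟨a, P ++ [z], z :: T', reach_r0 (a :: P) z [] hT'⟩
  | succ n ih =>
    intro P z R T hR hv hi
    by_cases hR0 : R.length ≤ n
    · exact ih P z R T hR0 hv hi
    have hRne : R ≠ [] := by rintro rfl; simp at hR0
    have hT : T ≠ [] := by
      rintro rfl
      have hpm : P.Perm R := by
        have := full_perm hv.1 hv.2
        exact (List.perm_append_right_iff [z]).1 this
      rcases hi P [z] R [z] rfl hpm with h | h
      · rw [h] at hpm; exact hRne (List.nil_perm.1 hpm)
      · simp at h
    obtain ⟨t0, ht0⟩ := List.exists_mem_of_ne_nil T hT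
    obtain ⟨Q, z1, W, e1, hz1, hQ⟩ := first_split (· ∈ T) (P ++ [z]) ⟨t0, hv.1.2 t0, ht0⟩
    obtain ⟨T', hT'⟩ := rot_last hz1
    have hre := reach_r0 P z R hT'
    have hv2 := hre.valid hv
    have hi2 := hre.irr hv hi
    have hzR := notMem_of_nodup hv.2.1
    -- z is in W
    have hzW : z ∈ W := by
      have hz1z : z ≠ z1 := by rintro rfl; exact hzR.2 hz1
      rcases List.eq_nil_or_concat W with h | ⟨W0, x, h⟩
      · rw [h] at e1
        have := List.append_inj' e1 rfl
        simp at this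
        exact absurd this.2 hz1z
      · rw [h] at e1 ⊢
        have e2 : P ++ [z] = (Q ++ z1 :: W0) ++ [x] := by simpa using e1
        have := List.append_inj' e2 rfl
        simp at this
        simp [this.2]
    obtain ⟨R', c, rest, e2, hc, hR'⟩ := first_split (· ∈ W) (R ++ z :: (T' ++ [z1]))
      ⟨z, by simp, hzW⟩
    have hcase : (R' = R ∧ c = z) ∨ R'.length < R.length := by
      rcases List.append_eq_append_iff.1 e2 with ⟨as, h3, h4⟩ | ⟨bs, h3, h4⟩
      · rcases as with _ | ⟨d, as⟩
        · simp at h3 h4; exact Or.inl ⟨h3, h4.1.symm⟩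
        · simp only [List.cons_append, List.cons.injEq] at h4
          rw [h3, ← h4.1] at hR'
          exact absurd hzW (hR' z (by simp))
      · rcases bs with _ | ⟨d, bs⟩
        · simp at h3 h4; exact Or.inl ⟨h3.symm, h4.1⟩
        · right; rw [h3]; simp
    rcases hcase with ⟨rfl, rfl⟩ | hlt
    · exfalso
      have hnd1 := hv.1.1
      simp only at hnd1
      rw [e1] at hnd1
      have hnd1' := hnd1
      rw [List.nodup_append] at hnd1
      have hpm : Q.Perm R' := by
        rw [List.perm_ext_iff_of_nodup hnd1.1 (List.nodup_append.1 hv.2.1).1]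
        intro a
        constructor
        · intro ha
          have h1 := hv.2.2 a
          simp only [List.mem_append, List.mem_cons] at h1
          rcases h1 with h | h | h
          · exact h
          · rw [h] at ha; exact absurd rfl (hnd1.2.2 c ha c (by simp [hzW]))
          · exact absurd h (hQ a ha)
        · intro ha
          have h1 := hv.1.2 a
          simp only [e1, List.mem_append, List.mem_cons] at h1
          rcases h1 with h | h | h
          · exact h
          · exfalso
            rw [h] at ha
            exact (List.nodup_append.1 hv.2.1).2.2 z1 ha z1 (by simp [hz1]) rfl
          · exact absurd h (hR' a ha)
      rcases hi2 Q (z1 :: W) R' (c :: (T' ++ [z1])) (by rw [e1]) hpm with h | h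
      · rw [h] at hpm; exact hRne (List.nil_perm.1 hpm)
      · simp at h
    · obtain ⟨W', hW'⟩ := rot_last hc
      have e3 : R' ++ c :: rest = (R ++ z :: T') ++ [z1] := by rw [← e2]; simp
      have hre2 : Reach (P ++ [z], R ++ z :: (T' ++ [z1])) ((Q ++ z1 :: W') ++ [c], R' ++ c :: rest) := by
        rw [e1, e3]
        have := reach_r1 (R ++ z :: T') z1 Q hW'
        simpa using this
      have hv3 := hre2.valid hv2
      have hi3 := hre2.irr hv2 hi2
      obtain ⟨a, U, V, h⟩ := ih (Q ++ z1 :: W') c R' rest (by omega) hv3 hi3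
      exact ⟨a, U, V, (hre.trans hre2).trans h⟩

lemma exists_std [Nonempty L] {p : List L × List L} (hv : Valid p) (hi : Irr p) :
    ∃ a U V, Reach p (a :: U, V ++ [a]) := by
  obtain ⟨l0, l1⟩ := p
  obtain ⟨a⟩ := ‹Nonempty L›
  rcases List.eq_nil_or_concat l0 with h | ⟨P, z, h⟩
  · have := hv.1.2 a; simp [h] at this
  · have hz := hv.2.2 z
    obtain ⟨R, T, h2⟩ := List.append_of_mem hz
    simp only at h2
    have h' : l0 = P ++ [z] := by simpa using h
    subst h' h2
    exact exists_std_aux _ P z R T le_rfl hv hi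

/-! rotations of standard pairs -/
lemma reach_A (a : L) {U U' V V' : List L} (hU : U ~r U') (hV : V ~r V') :
    Reach (a :: U, V ++ [a]) (a :: U', V' ++ [a]) :=
  (reach_r1 V a [] hU).trans (reach_l0 a U' [] hV)

lemma reach_Z (z : L) {U U' V V' : List L} (hU : U ~r U') (hV : V ~r V') :
    Reach (U ++ [z], z :: V) (U' ++ [z], z :: V') :=
  (reach_r0 U z [] hV).trans (reach_l1 z V' [] hU)

def GG (p : List L × List L) : Subgroup (Equiv.Perm L) where
  carrier := {σ | Reach p (mp σ p)}
  one_mem' := by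
    show Reach p (mp (fun x => x) p)
    rw [show (fun x : L => x) = id from rfl, mp_id]; exact Reach.refl p
  mul_mem' := by
    intro σ τ hσ hτ
    have := hσ.trans (Reach.map σ hτ)
    rw [mp_mp] at this
    exact this
  inv_mem' := by
    intro σ hσ
    have := (Reach.map (⇑σ⁻¹) hσ).symm
    rw [mp_mp] at this
    have e : (⇑σ⁻¹ ∘ ⇑σ) = id := by funext a; simp
    rw [e, mp_id] at this
    exact this

lemma mem_GG {p : List L × List L} {σ : Equiv.Perm L} : σ ∈ GG p ↔ Reach p (mp σ p) := Iff.rfl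

lemma GG_le {p q : List L × List L} (h : Reach p q) {σ : Equiv.Perm L} (hσ : σ ∈ GG q) :
    σ ∈ GG p := (h.trans hσ).trans (Reach.map σ h).symm

/-- the basic path -/
lemma reach_three {a b c : L} (u1 u2 v1 v2 : List L) :
    Reach (a :: (u1 ++ c :: (u2 ++ [b])), (b :: (v1 ++ c :: v2)) ++ [a])
      (c :: (u2 ++ a :: (u1 ++ [b])), (b :: (v2 ++ a :: v1)) ++ [c]) := by
  have h := reach_Z b (U := a :: (u1 ++ c :: u2)) (U' := c :: (u2 ++ a :: u1))
    (V := v1 ++ c :: (v2 ++ [a])) (V' := v2 ++ a :: (v1 ++ [c]))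
    (by simpa using rot_swap (a :: u1) (c :: u2))
    (by simpa using rot_swap (v1 ++ [c]) (v2 ++ [a]))
  simpa using h

lemma std_split {a : L} {U V : List L} (hv : Valid (a :: U, V ++ [a])) {b c : L}
    (hba : b ≠ a) (hca : c ≠ a) (hbc : b ≠ c) :
    ∃ u1 u2 v1 v2, Reach (a :: U, V ++ [a])
      (a :: (u1 ++ c :: (u2 ++ [b])), (b :: (v1 ++ c :: v2)) ++ [a]) := by
  have hU : ∀ x, x ≠ a → x ∈ U := by
    intro x hx; have := hv.1.2 x; simpa [hx] using this
  have hV : ∀ x, x ≠ a → x ∈ V := by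
    intro x hx; have := hv.2.2 x; simpa [hx] using this
  obtain ⟨U', hU'⟩ := rot_last (hU b hba)
  obtain ⟨V', hV'⟩ := rot_first (hV b hba)
  have hcU : c ∈ U' := by
    have := hU'.mem_iff.1 (hU c hca); simpa [hbc.symm] using this
  have hcV : c ∈ V' := by
    have := hV'.mem_iff.1 (hV c hca); simpa [hbc.symm] using this
  obtain ⟨u1, u2, rfl⟩ := List.append_of_mem hcU
  obtain ⟨v1, v2, rfl⟩ := List.append_of_mem hcV
  refine ⟨u1, u2, v1, v2, ?_⟩
  have := reach_A a hU' hV'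
  simpa using this

lemma std_three {a : L} {U V : List L} (hv : Valid (a :: U, V ++ [a])) {b c : L}
    (hba : b ≠ a) (hca : c ≠ a) (hbc : b ≠ c) (σ : Equiv.Perm L)
    (h1 : σ a = c) (h2 : σ c = b) (h3 : σ b = a) (h4 : ∀ x, x ≠ a → x ≠ b → x ≠ c → σ x = x) :
    σ ∈ GG (a :: U, V ++ [a]) := by
  obtain ⟨u1, u2, v1, v2, h⟩ := std_split hv hba hca hbc
  apply GG_le h
  have hv2 := h.valid hv
  have hn1 := hv2.1.1
  have hn2 := hv2.2.1
  have key : ∀ l : List L, a ∉ l → b ∉ l → c ∉ l → l.map σ = l := by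
    intro l ha hb hc
    conv_rhs => rw [← List.map_id l]
    apply List.map_congr_left
    intro x hx
    apply h4
    · rintro rfl; exact ha hx
    · rintro rfl; exact hb hx
    · rintro rfl; exact hc hx
  simp only [List.nodup_cons, List.nodup_append, List.mem_append, List.mem_cons, not_or,
    List.cons_append] at hn1 hn2
  have k1 : u1.map σ = u1 := by
    apply key
    · exact hn1.1.1
    · intro hb; exact hn1.2.2.2 b hb b (by simp) rfl
    · intro hc; exact hn1.2.2.2 c hc c (by simp) rfl
  have k2 : u2.map σ = u2 := by
    apply key
    · exact hn1.1.2.2.1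
    · intro hb; exact hn1.2.2.1.2.2.2 b hb b (by simp) rfl
    · intro hc; exact hn1.2.2.1.1.1 hc
  have k3 : v1.map σ = v1 := by
    apply key
    · intro ha; exact hn2.2.2.2 a (by simp [ha]) a (by simp) rfl
    · exact hn2.1.1.1
    · intro hc; exact hn2.2.1.2.2 c hc c (by simp) rfl
  have k4 : v2.map σ = v2 := by
    apply key
    · intro ha; exact hn2.2.2.2 a (by simp [ha]) a (by simp) rfl
    · exact hn2.1.1.2.2
    · exact hn2.2.1.2.1.1
  rw [mem_GG]
  refine (reach_three u1 u2 v1 v2).trans ?_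
  have := reach_A c (U := u2 ++ a :: (u1 ++ [b])) (U' := u1 ++ b :: (u2 ++ [a]))
    (V := b :: (v2 ++ a :: v1)) (V' := a :: (v1 ++ b :: v2))
    (by simpa using rot_swap (u2 ++ [a]) (u1 ++ [b]))
    (by simpa using rot_swap (b :: v2) (a :: v1))
  simpa [mp, h1, h2, h3, k1, k2, k3, k4] using this

theorem part2 [Fintype L] [Nonempty L] {p : List L × List L} (hv : Valid p) (hi : Irr p) :
    alternatingGroup L ≤ GG p := by
  obtain ⟨a, U, V, h⟩ := exists_std hv hi
  have hv1 := h.valid hv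
  rw [← Equiv.Perm.closure_three_cycles_eq_alternating, Subgroup.closure_le]
  intro σ hσ
  have hσ : σ.IsThreeCycle := hσ
  apply GG_le h
  have hcard := hσ.card_support
  have h3 : σ ^ 3 = 1 := by rw [← hσ.orderOf]; exact pow_orderOf_eq_one σ
  have h3' : ∀ x, σ (σ (σ x)) = x := by
    intro x
    have := congrArg (fun τ : Equiv.Perm L => τ x) h3
    simpa [pow_succ] using this
  obtain ⟨x, hx⟩ : ∃ x, x ∈ σ.support := by
    apply Finset.card_pos.1; omega
  rw [Equiv.Perm.mem_support] at hx
  set y := σ x with hy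
  set z := σ y with hz
  have hzx : σ z = x := h3' x
  have hyx : y ≠ x := hx
  have hzy : z ≠ y := fun h => hx (σ.injective (by rw [← hy, ← hz]; exact h))
  have hzx' : z ≠ x := by
    intro h; rw [h, ← hy] at hzx; exact hyx hzx
  have hsub : σ.support = {x, y, z} := by
    symm
    apply Finset.eq_of_subset_of_card_le
    · intro w hw
      simp only [Finset.mem_insert, Finset.mem_singleton] at hw
      rw [Equiv.Perm.mem_support]
      rcases hw with rfl | rfl | rfl
      · exact hx
      · exact hzy
      · rw [hzx]; exact hzx'.symm
    · rw [hcard, Finset.card_eq_three.2 ⟨x, y, z, hyx.symm, hzx'.symm, hzy.symm, rfl⟩]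
  have hfix : ∀ w, w ≠ x → w ≠ z → w ≠ y → σ w = w := by
    intro w h1 h2 h3
    by_contra hw
    have : w ∈ σ.support := Equiv.Perm.mem_support.2 hw
    rw [hsub] at this
    simp [h1, h2, h3] at this
  have hspecial : ∃ U' V', Reach (a :: U, V ++ [a]) (x :: U', V' ++ [x]) := by
    by_cases hxa : x = a
    · subst hxa; exact ⟨U, V, Reach.refl _⟩
    · obtain ⟨b, hb1, hb2⟩ : ∃ b, b ≠ a ∧ b ≠ x := by
        by_cases hya : y = a
        · exact ⟨z, by rw [← hya]; exact hzy, hzx'⟩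
        · exact ⟨y, hya, hyx⟩
      obtain ⟨u1, u2, v1, v2, hr⟩ := std_split hv1 hb1 hxa hb2
      exact ⟨_, _, hr.trans (reach_three u1 u2 v1 v2)⟩
  obtain ⟨U', V', hr⟩ := hspecial
  apply GG_le hr
  exact std_three (hr.valid hv1) hzx' hyx hzy σ hy.symm hz.symm hzx hfix
end Std
end RZ

namespace RZ
open Relation
set_option linter.unusedSectionVars false
set_option linter.unusedSimpArgs false
set_option linter.unusedVariables false

section Walk
variable {L : Type*} [DecidableEq L] [Fintype L]

noncomputable abbrev per (κ : Equiv.Perm L) (x : L) : ℕ := Function.minimalPeriod κ x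

lemma pow_eq_iterate (κ : Equiv.Perm L) (n : ℕ) (x : L) : (κ ^ n) x = κ^[n] x := by
  rw [Equiv.Perm.iterate_eq_pow]

lemma per_pos (κ : Equiv.Perm L) (x : L) : 0 < per κ x := by
  have hx : x ∈ Function.periodicPts κ :=
    ⟨orderOf κ, orderOf_pos κ, by
      show κ^[orderOf κ] x = x
      rw [← pow_eq_iterate, pow_orderOf_eq_one]; rfl⟩
  exact Function.minimalPeriod_pos_of_mem_periodicPts hx

lemma pow_per (κ : Equiv.Perm L) (x : L) : (κ ^ per κ x) x = x := by
  rw [pow_eq_iterate]; exact Function.iterate_minimalPeriod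

lemma pow_ne_of_lt {κ : Equiv.Perm L} {x : L} {i : ℕ} (h0 : 0 < i) (hi : i < per κ x) :
    (κ ^ i) x ≠ x := by
  intro h
  rw [pow_eq_iterate] at h
  exact absurd (Function.IsPeriodicPt.minimalPeriod_le h0 h) (not_le.2 hi)

lemma per_eq {κ : Equiv.Perm L} {x : L} {n : ℕ} (h0 : 0 < n) (h1 : (κ ^ n) x = x)
    (h2 : ∀ i, 0 < i → i < n → (κ ^ i) x ≠ x) : per κ x = n := by
  apply le_antisymm
  · rw [pow_eq_iterate] at h1
    exact Function.IsPeriodicPt.minimalPeriod_le h0 h1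
  · by_contra h
    push Not at h
    exact h2 _ (per_pos κ x) h (pow_per κ x)

lemma pow_ne_pow {κ : Equiv.Perm L} {x : L} {i j : ℕ} (hij : i < j) (hj : j < per κ x) :
    (κ ^ i) x ≠ (κ ^ j) x := by
  intro h
  have e : j = i + (j - i) := by omega
  rw [e, pow_add, Equiv.Perm.mul_apply] at h
  exact pow_ne_of_lt (i := j - i) (by omega) (by omega) ((κ ^ i).injective h).symm

lemma per_congr {κ κ' : Equiv.Perm L} {x : L} (h : ∀ i : ℕ, (κ ^ i) x = (κ' ^ i) x) :
    per κ x = per κ' x := by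
  apply per_eq (per_pos κ' x)
  · rw [h, pow_per]
  · intro i h0 hi; rw [h]; exact pow_ne_of_lt h0 hi

lemma per_sameCycle {κ : Equiv.Perm L} {x y : L} (h : κ.SameCycle x y) : per κ x = per κ y := by
  obtain ⟨i, rfl⟩ := h
  have e : ∀ j : ℕ, (κ ^ j) ((κ ^ i) x) = (κ ^ i) ((κ ^ j) x) := by
    intro j
    rw [← Equiv.Perm.mul_apply, ← Equiv.Perm.mul_apply]
    congr 1
    exact ((Commute.refl κ).pow_left j).zpow_right i
  symm
  apply per_eq (per_pos κ x)
  · rw [e, pow_per]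
  · intro j h0 hj h
    rw [e] at h
    exact pow_ne_of_lt h0 hj ((κ ^ i).injective h)

lemma ncard_sameCycle (κ : Equiv.Perm L) (x : L) : {y | κ.SameCycle x y}.ncard = per κ x := by
  have e : {y | κ.SameCycle x y} = (fun i => (κ ^ i) x) '' (Set.Iio (per κ x)) := by
    ext y
    simp only [Set.mem_ofPred_eq, Set.mem_image, Set.mem_Iio]
    constructor
    · intro h
      obtain ⟨i, hi⟩ := h.exists_nat_pow_eq
      refine ⟨i % per κ x, Nat.mod_lt _ (per_pos κ x), ?_⟩
      rw [← hi, pow_eq_iterate, pow_eq_iterate, Function.iterate_mod_minimalPeriod_eq]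
    · rintro ⟨i, _, rfl⟩
      exact ⟨i, by simp⟩
  rw [e, Set.InjOn.ncard_image]
  · simp [Set.ncard_eq_toFinset_card']
  · intro i hi j hj hij
    simp only [Set.mem_Iio] at hi hj
    rcases lt_trichotomy i j with h | h | h
    · exact absurd hij (pow_ne_pow h hj)
    · exact h
    · exact absurd hij.symm (pow_ne_pow h hi)

/-- Splitting: `k'' = swap e α * khat * swap e γ`, with `γ = khat^k α`. -/
lemma walkW {kh : Equiv.Perm L} {e α : L} {k : ℕ} (he : kh e = e) (hα : α ≠ e)
    (hk : k < per kh α) :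
    (∀ i, i ≤ k → ((Equiv.swap e α * kh * Equiv.swap e ((kh ^ k) α)) ^ i) α = (kh ^ i) α) ∧
    per (Equiv.swap e α * kh * Equiv.swap e ((kh ^ k) α)) α = k + 1 := by
  set κ := Equiv.swap e α * kh * Equiv.swap e ((kh ^ k) α) with hκ
  have hne : ∀ i : ℕ, (kh ^ i) α ≠ e := by
    intro i h
    have : (kh ^ i) e = e := by rw [pow_eq_iterate]; exact Function.iterate_fixed he i
    exact hα ((kh ^ i).injective (h.trans this.symm))
  have h1 : ∀ i, i ≤ k → (κ ^ i) α = (kh ^ i) α := by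
    intro i
    induction i with
    | zero => intro _; rfl
    | succ i ih =>
      intro hi
      rw [pow_succ', Equiv.Perm.mul_apply, ih (by omega), hκ, Equiv.Perm.mul_apply,
        Equiv.Perm.mul_apply, Equiv.swap_apply_of_ne_of_ne (hne i) (pow_ne_pow (by omega) hk),
        ← Equiv.Perm.mul_apply kh, ← pow_succ', Equiv.swap_apply_of_ne_of_ne (hne _)
        (pow_ne_of_lt (by omega) (by omega))]
  refine ⟨h1, per_eq (by omega) ?_ ?_⟩
  · rw [pow_succ', Equiv.Perm.mul_apply, h1 k le_rfl, hκ, Equiv.Perm.mul_apply,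
        Equiv.Perm.mul_apply, Equiv.swap_apply_right, he, Equiv.swap_apply_left]
  · intro i h0 hi
    rw [h1 i (by omega)]
    exact pow_ne_of_lt h0 (by omega)

lemma walkW2 {kh : Equiv.Perm L} {e α : L} {k : ℕ} (he : kh e = e) (hα : α ≠ e)
    (hk : k < per kh α) :
    per (Equiv.swap e α * kh * Equiv.swap e ((kh ^ k) α)) e = per kh α - k := by
  set κ := Equiv.swap e α * kh * Equiv.swap e ((kh ^ k) α) with hκ
  have hne : ∀ i : ℕ, (kh ^ i) α ≠ e := by
    intro i h
    have : (kh ^ i) e = e := by rw [pow_eq_iterate]; exact Function.iterate_fixed he i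
    exact hα ((kh ^ i).injective (h.trans this.symm))
  have h1 : ∀ i, i + k + 1 ≤ per kh α →
      (κ ^ (i + 1)) e = Equiv.swap e α ((kh ^ (i + k + 1)) α) := by
    intro i
    induction i with
    | zero =>
      intro _
      rw [zero_add, pow_one, hκ, Equiv.Perm.mul_apply, Equiv.Perm.mul_apply,
        Equiv.swap_apply_left, ← Equiv.Perm.mul_apply kh, ← pow_succ', zero_add]
    | succ i ih =>
      intro hi
      rw [pow_succ', Equiv.Perm.mul_apply, ih (by omega),
        Equiv.swap_apply_of_ne_of_ne (hne _) (pow_ne_of_lt (by omega) (by omega)),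
        hκ, Equiv.Perm.mul_apply, Equiv.Perm.mul_apply,
        Equiv.swap_apply_of_ne_of_ne (hne _) (Ne.symm (pow_ne_pow (by omega) (by omega))),
        ← Equiv.Perm.mul_apply kh, ← pow_succ']
      congr 3
      omega
  have hD := per_pos kh α
  apply per_eq (by omega)
  · have := h1 (per kh α - k - 1) (by omega)
    rw [show per kh α - k - 1 + 1 = per kh α - k by omega,
      show per kh α - k - 1 + k + 1 = per kh α by omega, pow_per,
      Equiv.swap_apply_right] at this
    exact this
  · intro i h0 hi
    obtain ⟨j, rfl⟩ : ∃ j, i = j + 1 := ⟨i - 1, by omega⟩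
    rw [h1 j (by omega),
        Equiv.swap_apply_of_ne_of_ne (hne _) (pow_ne_of_lt (by omega) (by omega))]
    exact hne _

/-- orbits away from the surgery are unchanged -/
lemma walk_away {κ : Equiv.Perm L} {e α γ b : L} (h1 : ∀ i : ℕ, (κ ^ i) b ≠ e)
    (h2 : ∀ i : ℕ, (κ ^ i) b ≠ α) (h3 : ∀ i : ℕ, (κ ^ i) b ≠ γ) (i : ℕ) :
    ((Equiv.swap e α * κ * Equiv.swap e γ) ^ i) b = (κ ^ i) b := by
  induction i with
  | zero => rfl
  | succ i ih =>
    rw [pow_succ', Equiv.Perm.mul_apply, ih, Equiv.Perm.mul_apply, Equiv.Perm.mul_apply,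
      Equiv.swap_apply_of_ne_of_ne (h1 i) (h3 i), ← Equiv.Perm.mul_apply κ, ← pow_succ',
      Equiv.swap_apply_of_ne_of_ne (h1 _) (h2 _)]

lemma walkW0 {κ : Equiv.Perm L} {e α γ : L} (hγ : κ γ = α) (hne : ¬ κ.SameCycle α e) :
    ∀ i, i < per κ α → ((Equiv.swap e α * κ * Equiv.swap e γ) ^ i) α = (κ ^ i) α := by
  have h1 : ∀ i : ℕ, (κ ^ i) α ≠ e := fun i h => hne ⟨i, by simpa using h⟩
  intro i
  induction i with
  | zero => intro _; rfl
  | succ i ih =>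
    intro hi
    have h3 : (κ ^ i) α ≠ γ := by
      intro h
      apply pow_ne_of_lt (i := i + 1) (by omega) hi
      rw [pow_succ', Equiv.Perm.mul_apply, h, hγ]
    rw [pow_succ', Equiv.Perm.mul_apply, ih (by omega), Equiv.Perm.mul_apply, Equiv.Perm.mul_apply,
      Equiv.swap_apply_of_ne_of_ne (h1 i) h3, ← Equiv.Perm.mul_apply κ, ← pow_succ',
      Equiv.swap_apply_of_ne_of_ne (h1 _) (pow_ne_of_lt (by omega) hi)]

/-- the abstract surgery step -/
lemma surgery {κ : Equiv.Perm L} {e α γ : L} (hγ : κ γ = α) (hαe : α ≠ e) (hγe : γ ≠ e)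
    (hne : ¬ κ.SameCycle α e) :
    let kh := Equiv.swap e α * κ * Equiv.swap e γ
    γ = (kh ^ (per κ α - 1)) α ∧
    (per κ e = per κ α → (kh⁻¹ ^ per κ α) α = γ) ∧
    (per (Equiv.swap e α * kh * Equiv.swap e ((kh⁻¹ ^ per κ α) α)) α = per κ e) ∧
    (∀ b, ¬ κ.SameCycle b e → ¬ κ.SameCycle b α →
      (∀ i : ℕ, ((Equiv.swap e α * kh * Equiv.swap e ((kh⁻¹ ^ per κ α) α)) ^ i) b
        = (κ ^ i) b)) := by
  intro kh
  set d := per κ α with hd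
  have hd0 : 0 < d := per_pos κ α
  have hkhe : kh e = e := by
    simp [kh, hγ]
  have hκ : κ = Equiv.swap e α * kh * Equiv.swap e γ := by
    simp only [kh]
    rw [mul_assoc, mul_assoc, Equiv.swap_mul_self, mul_one, Equiv.swap_mul_self_mul]
  have hwalk := walkW0 hγ hne
  have hγ1 : γ = (kh ^ (d - 1)) α := by
    have := hwalk (d - 1) (by omega)
    rw [this]
    apply κ.injective
    rw [hγ, ← Equiv.Perm.mul_apply, ← pow_succ', Nat.sub_add_cancel hd0, pow_per]
  have hdD : d ≤ per kh α := by
    by_contra h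
    push Not at h
    have h1 := hwalk _ h
    have h2 := pow_per kh α
    rw [h2] at h1
    exact pow_ne_of_lt (per_pos kh α) h h1.symm
  have hk : d - 1 < per kh α := by omega
  have hpe : per κ e = per kh α - (d - 1) := by
    have := walkW2 hkhe hαe hk
    rw [← hγ1, ← hκ] at this
    exact this
  have hneg : (kh⁻¹ ^ d) α = (kh ^ (per kh α - d)) α := by
    rw [inv_pow, Equiv.Perm.inv_eq_iff_eq, ← Equiv.Perm.mul_apply, ← pow_add,
      show d + (per kh α - d) = per kh α by omega, pow_per]
  refine ⟨hγ1, ?_, ?_, ?_⟩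
  · intro h
    rw [hneg, hγ1]
    congr 2
    omega
  · rw [hneg, (walkW hkhe hαe (by omega)).2]
    omega
  · intro b hbe hbα i
    have hb1 : ∀ i : ℕ, (κ ^ i) b ≠ e := fun i h => hbe ⟨i, by simpa using h⟩
    have hb2 : ∀ i : ℕ, (κ ^ i) b ≠ α := fun i h => hbα ⟨i, by simpa using h⟩
    have hb3 : ∀ i : ℕ, (κ ^ i) b ≠ γ := by
      intro i h
      apply hb2 (i + 1)
      rw [pow_succ', Equiv.Perm.mul_apply, h, hγ]
    have hk1 := walk_away hb1 hb2 hb3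
    change ∀ i : ℕ, (kh ^ i) b = _ at hk1
    rw [walk_away, hk1]
    · intro i; rw [hk1]; exact hb1 i
    · intro i; rw [hk1]; exact hb2 i
    · intro i h
      have : kh.SameCycle b α := by
        refine ⟨d + i, ?_⟩
        rw [zpow_add, Equiv.Perm.mul_apply]
        rw [inv_pow] at h
        simp only [zpow_natCast]
        rw [h]
        simp
      obtain ⟨j, hj⟩ := this.exists_nat_pow_eq
      rw [hk1] at hj
      exact hb2 j hj
end Walk
end RZ

namespace RZ
open Relation
set_option linter.unusedSectionVars false
set_option linter.unusedSimpArgs false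
set_option linter.unusedVariables false

section Transfer
variable {L : Type*} [DecidableEq L]

lemma Simp_transfer {p q : List L × List L} {c r : Option L} (hrc : r ≠ c) (hr : Vt p c r)
    (hV : ∀ x y, x ≠ c → y ≠ c → Vt q x y → Vt p x y)
    (hl : ∀ x, x ≠ c → len q x = len p x) (hs : Simp q) : Simp p := by
  have rep : ∀ x, ∃ x', x' ≠ c ∧ Vt p x x' := by
    intro x
    by_cases h : x = c
    · exact ⟨r, hrc, by rw [h]; exact hr⟩
    · exact ⟨x, h, Vt.refl _ _⟩
  intro x y hxy
  obtain ⟨x', hx', hxx⟩ := rep x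
  obtain ⟨y', hy', hyy⟩ := rep y
  have : Vt q x' y' := hs _ _ (by
    rw [hl _ hx', hl _ hy', ← hxx.len_eq, ← hyy.len_eq, hxy])
  exact (hxx.trans (hV _ _ hx' hy' this)).trans hyy.symm

lemma Simp_r0 {P : List L} {z : L} {R T : List L} {y : L}
    (hp : Valid (P ++ [z], R ++ z :: (T ++ [y])))
    (hs : Simp (P ++ [z], R ++ z :: y :: T)) : Simp (P ++ [z], R ++ z :: (T ++ [y])) := by
  have hyz : (some y : Option L) ≠ some z := by
    have h := (notMem_of_nodup hp.2.1).2
    simp at h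
    simp only [ne_eq, Option.some.injEq]
    exact fun e => h.2 e.symm
  refine Simp_transfer (nxt_ne_none hp.1 hyz) (Vt_r0_none' hp) ?_ ?_ hs
  · intro x y hx hy
    obtain ⟨x, rfl⟩ := Option.ne_none_iff_exists'.1 hx
    obtain ⟨y, rfl⟩ := Option.ne_none_iff_exists'.1 hy
    exact (Vt_r0 hp x y).1
  · intro x hx
    obtain ⟨x, rfl⟩ := Option.ne_none_iff_exists'.1 hx
    exact len_r0 hp x

lemma Simp_l0 {a : L} {P : List L} {y : L} {T R : List L}
    (hp : Valid (a :: P, y :: (T ++ a :: R)))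
    (hs : Simp (a :: P, T ++ y :: a :: R)) : Simp (a :: P, y :: (T ++ a :: R)) := by
  have hya : (some y : Option L) ≠ some a := by
    have h := hp.2.1
    simp at h
    simp only [ne_eq, Option.some.injEq]
    exact h.1.2.1
  refine Simp_transfer hya (Vt_l0_ay hp) ?_ ?_ hs
  · intro x y hx hy
    exact (Vt_l0 hp hx hy).1
  · intro x hx
    exact len_l0 hp hx

lemma Simp_swap [Fintype L] {p : List L × List L} (hp : Valid p) (hs : Simp p) : Simp p.swap := by
  intro x y h
  rw [len_swap p hp, len_swap p hp] at h
  exact (Vt_swap p x y).2 (hs x y h)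

lemma Simp_step [Fintype L] {p q : List L × List L} (h : Step p q) (hp : Valid p) (hs : Simp q) :
    Simp p := by
  have hq := h.valid hp
  cases h with
  | r0 P z R T y => exact Simp_r0 hp hs
  | l0 a P y T R => exact Simp_l0 hp hs
  | r1 P z R T y => exact Simp_swap hp.swap (Simp_r0 hp.swap (Simp_swap hq hs))
  | l1 a P y T R => exact Simp_swap hp.swap (Simp_l0 hp.swap (Simp_swap hq hs))

lemma Simp_reach [Fintype L] {p q : List L × List L} (h : Reach p q) (hp : Valid p)
    (hs : Simp q) : Simp p := by
  unfold Reach at h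
  induction h with
  | refl => exact hs
  | tail h1 h2 ih => exact ih (Simp_step h2 (Reach.valid h1 hp) hs)
end Transfer

section CC
variable {L : Type*} [DecidableEq L]

def C (p0 : List L × List L) (a0 : L) (τ β σ : Equiv.Perm L) : Prop :=
  ∃ U V : List L, Valid (a0 :: U, V ++ [a0]) ∧ U.formPerm = τ ∧ V.formPerm = β ∧
    Reach p0 (mp σ (a0 :: U, V ++ [a0]))

lemma std_nodup {a0 : L} {U V : List L} (h : Valid (a0 :: U, V ++ [a0])) :
    U.Nodup ∧ V.Nodup ∧ a0 ∉ U ∧ a0 ∉ V ∧ (∀ b, b ≠ a0 → b ∈ U) ∧ (∀ b, b ≠ a0 → b ∈ V) := by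
  have h1 := List.nodup_cons.1 h.1.1
  have h2 := notMem_of_nodup h.2.1
  have h3 := List.nodup_append.1 h.2.1
  refine ⟨h1.2, h3.1, h1.1, h2.1, ?_, ?_⟩
  · intro b hb; have := h.1.2 b; simpa [hb] using this
  · intro b hb; have := h.2.2 b; simpa [hb] using this

lemma std_perm {a0 : L} {U V : List L} (h : Valid (a0 :: U, V ++ [a0])) : U.Perm V := by
  have h0 : (a0 :: U).Perm (V ++ [a0]) := full_perm h.1 h.2
  exact (h0.trans (List.perm_append_singleton a0 V)).cons_inv

lemma rot_unique {U U' : List L} (hn : U.Nodup) (hp : U.Perm U')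
    (h : U.formPerm = U'.formPerm) : U ~r U' := by
  rcases (List.formPerm_eq_formPerm_iff hn (hp.nodup_iff.1 hn)).1 h with h | h
  · exact h
  · obtain ⟨h1, h2⟩ := h
    have : U = U' := by
      rcases U with _ | ⟨a, _ | ⟨b, U⟩⟩
      · exact (List.nil_perm.1 hp).symm
      · exact (List.singleton_perm.1 hp)
      · simp at h1
    rw [this]

lemma C_unique {p0 : List L × List L} {a0 : L} {τ β σ σ' : Equiv.Perm L}
    (h : C p0 a0 τ β σ) (h' : C p0 a0 τ β σ') : σ' * σ⁻¹ ∈ GG p0 := by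
  obtain ⟨U, V, hv, h1, h2, h3⟩ := h
  obtain ⟨U', V', hv', h1', h2', h3'⟩ := h'
  have pU : U.Perm U' := (full_perm hv.1 hv'.1).cons_inv
  have pV : V.Perm V' := (std_perm hv).symm.trans (pU.trans (std_perm hv'))
  have hr := reach_A a0 (rot_unique (std_nodup hv).1 pU (h1.trans h1'.symm))
    (rot_unique (std_nodup hv).2.1 pV (h2.trans h2'.symm))
  have e1 := h3'.trans (hr.map σ').symm
  have e2 := h3.map (σ' * σ⁻¹ : Equiv.Perm L)
  rw [mp_mp, ← Equiv.Perm.coe_mul, inv_mul_cancel_right] at e2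
  exact e1.trans e2.symm

lemma formPerm_last {s s' P : List L} {a x : L} (h : s = a :: s') (h' : s = P ++ [x]) :
    s.formPerm x = a := by
  have := List.formPerm_apply_getLast a s'
  simp only [← h] at this
  have e : s.getLast (by rw [h]; simp) = x := by
    simp only [h', List.getLast_append_singleton]
  rwa [e] at this

lemma ins_before {u1 u2 : List L} {e y : L} (hn : (u1 ++ e :: y :: u2).Nodup) :
    (u1 ++ e :: y :: u2).formPerm = Equiv.swap e y * (u1 ++ y :: u2).formPerm := by
  have r1 : (u1 ++ e :: y :: u2) ~r (e :: y :: (u2 ++ u1)) := by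
    simpa using rot_swap u1 (e :: y :: u2)
  have r2 : (u1 ++ y :: u2) ~r (y :: (u2 ++ u1)) := by
    simpa using rot_swap u1 (y :: u2)
  have hn2 : (u1 ++ y :: u2).Nodup := by
    refine hn.sublist (List.Sublist.append_left ?_ _)
    simp
  rw [List.formPerm_eq_of_isRotated hn r1, List.formPerm_eq_of_isRotated hn2 r2,
    List.formPerm_cons_cons]

lemma ins_after {w1 w2 : List L} {x e : L} (hn : (w1 ++ x :: e :: w2).Nodup) :
    (w1 ++ x :: e :: w2).formPerm =
      Equiv.swap e ((w1 ++ x :: w2).formPerm x) * (w1 ++ x :: w2).formPerm := by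
  have r1 : (w1 ++ x :: e :: w2) ~r (e :: (w2 ++ w1 ++ [x])) := by
    simpa using rot_swap (w1 ++ [x]) (e :: w2)
  have r2 : (w1 ++ x :: w2) ~r (w2 ++ w1 ++ [x]) := by
    simpa using rot_swap (w1 ++ [x]) (w2)
  have hn2 : (w1 ++ x :: w2).Nodup := by
    refine hn.sublist (List.Sublist.append_left ?_ _)
    simp
  rw [List.formPerm_eq_of_isRotated hn r1, List.formPerm_eq_of_isRotated hn2 r2]
  obtain ⟨h, t, ht⟩ : ∃ h t, w2 ++ w1 ++ [x] = h :: t := by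
    cases hh : w2 ++ w1 ++ [x] with
    | nil => simp at hh
    | cons h t => exact ⟨h, t, rfl⟩
  have hx : (w2 ++ w1 ++ [x]).formPerm x = h := by
    have := List.formPerm_apply_getLast h t
    simp only [← ht] at this
    simpa using this
  rw [hx, ht, List.formPerm_cons_cons]

lemma half {p0 : List L × List L} {a0 e : L} {τ β σ : Equiv.Perm L} (h : C p0 a0 τ β σ)
    (hea : e ≠ a0) (hτ : τ e ≠ e) :
    C p0 a0 (Equiv.swap e (β e) * (Equiv.swap e (τ e) * τ))
      (Equiv.swap e ((Equiv.swap e (β e) * β) ((Equiv.swap e (τ e) * τ)⁻¹ (τ e))) *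
        (Equiv.swap e (β e) * β)) (σ * Equiv.swap e (β e)) := by
  obtain ⟨U, V, hv, h1, h2, h3⟩ := h
  obtain ⟨nU, nV, aU, aV, mU, mV⟩ := std_nodup hv
  have lU : 2 ≤ U.length := (List.formPerm_apply_mem_ne_self_iff U nU e (mU e hea)).1 (by rw [h1]; exact hτ)
  -- rotate
  obtain ⟨s1, s2, hs⟩ := List.append_of_mem (mU e hea)
  obtain ⟨t1, t2, ht⟩ := List.append_of_mem (mV e hea)
  have rU : U ~r (s2 ++ s1 ++ [e]) := by rw [hs]; simpa using rot_swap (s1 ++ [e]) s2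
  have rV : V ~r (e :: (t2 ++ t1)) := by rw [ht]; simpa using rot_swap t1 (e :: t2)
  have lV : 2 ≤ V.length := by rw [← (std_perm hv).length_eq]; exact lU
  obtain ⟨s, hs'⟩ : ∃ s, s2 ++ s1 = s := ⟨_, rfl⟩
  rw [hs'] at rU
  obtain ⟨y, w, hw⟩ : ∃ y w, t2 ++ t1 = y :: w := by
    cases hh : t2 ++ t1 with
    | nil => 
      have : (t1 ++ t2).length = 0 := by rw [List.length_append, add_comm, ← List.length_append, hh]; rfl
      rw [ht] at lV
      simp at lV this
      simp [this] at lV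
    | cons h t => exact ⟨h, t, rfl⟩
  rw [hw] at rV
  have nU' : (s ++ [e]).Nodup := rU.nodup_iff.1 nU
  have nV' : (e :: y :: w).Nodup := rV.nodup_iff.1 nV
  have pp : (s ++ [e]).Perm (e :: y :: w) := rU.perm.symm.trans ((std_perm hv).trans rV.perm)
  have ps : s.Perm (y :: w) := ((List.perm_append_singleton e s).symm.trans pp).cons_inv
  have hys : y ∈ s := ps.mem_iff.2 (by simp)
  obtain ⟨u1, u2, hu⟩ := List.append_of_mem hys
  obtain ⟨α, s', hα⟩ : ∃ α s', s = α :: s' := by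
    cases hh : s with
    | nil => rw [hh] at hys; simp at hys
    | cons h t => exact ⟨h, t, rfl⟩
  have hτ' : τ = Equiv.swap e α * s.formPerm := by
    rw [← h1, List.formPerm_eq_of_isRotated nU (rU.trans (rot_one e s).symm), hα,
      List.formPerm_cons_cons]
  have hβ' : β = Equiv.swap e y * (y :: w).formPerm := by
    rw [← h2, List.formPerm_eq_of_isRotated nV rV, List.formPerm_cons_cons]
  have es : e ∉ s := (notMem_of_nodup nU').1
  have ew : e ∉ y :: w := (List.nodup_cons.1 nV').1
  have τe : τ e = α := by
    rw [hτ', Equiv.Perm.mul_apply, List.formPerm_apply_of_notMem es, Equiv.swap_apply_left]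
  have βe : β e = y := by
    rw [hβ', Equiv.Perm.mul_apply, List.formPerm_apply_of_notMem ew, Equiv.swap_apply_left]
  have τh : Equiv.swap e α * τ = s.formPerm := by rw [hτ', Equiv.swap_mul_self_mul]
  have βh : Equiv.swap e y * β = (y :: w).formPerm := by rw [hβ', Equiv.swap_mul_self_mul]
  rw [τe, βe, τh, βh]
  -- the last letter
  obtain ⟨Pl, x, hx⟩ : ∃ Pl x, y :: u2 = Pl ++ [x] := by
    rcases List.eq_nil_or_concat (y :: u2) with h | ⟨P, z, h⟩
    · simp at h
    · exact ⟨P, z, by simpa using h⟩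
  have hsx : s.formPerm x = α := by
    exact formPerm_last hα (by rw [hu, hx, List.append_assoc] : s = (u1 ++ Pl) ++ [x])
  have hsx' : (s.formPerm)⁻¹ α = x := by rw [Equiv.Perm.inv_eq_iff_eq, hsx]
  rw [hsx']
  have hxw : x ∈ y :: w := ps.mem_iff.1 (by rw [hu, hx]; simp)
  obtain ⟨w1, w2, hw2⟩ := List.append_of_mem hxw
  have nye : y ≠ e := fun h => ew (by simp [h])
  have nya : y ≠ a0 := by
    rintro rfl
    exact aU (rU.perm.mem_iff.2 (by simp [hys]))
  have nS1 : (u1 ++ e :: y :: u2).Nodup := by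
    have : (s ++ [e]).Perm (u1 ++ e :: y :: u2) := by
      rw [hu]
      refine (List.perm_append_singleton e _).trans List.perm_middle.symm
    exact this.nodup_iff.1 nU'
  have nS2 : (w1 ++ x :: e :: w2).Nodup := by
    have : (e :: y :: w).Perm (w1 ++ x :: e :: w2) := by
      rw [hw2]
      simpa using (List.perm_middle (a := e) (l₁ := w1 ++ [x]) (l₂ := w2)).symm
    exact this.nodup_iff.1 nV'
  have path1 : Reach (a0 :: U, V ++ [a0]) (a0 :: (s ++ [e]), e :: y :: w ++ [a0]) := reach_A a0 rU rV
  have path2 : Reach (a0 :: (s ++ [e]), e :: y :: w ++ [a0]) (a0 :: (s ++ [e]), e :: (w ++ [a0, y])) := by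
    have := reach_r0 (a0 :: s) e [] (T := y :: (w ++ [a0])) (T' := (w ++ [a0]) ++ [y]) (rot_one _ _)
    simpa using this
  have path3 : Reach (a0 :: (s ++ [e]), e :: (w ++ [a0, y])) (a0 :: (u1 ++ y :: e :: u2), e :: (w ++ [a0, y])) := by
    rw [hu]
    have := reach_r1 (e :: (w ++ [a0])) y (a0 :: u1) (T := u2 ++ [e]) (T' := e :: u2) (rot_one _ _).symm
    simpa using this
  have eu1 : e ∉ u1 := fun h => es (by rw [hu]; simp [h])
  have eu2 : e ∉ u2 := fun h => es (by rw [hu]; simp [h])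
  have ns : s.Nodup := (List.nodup_append.1 nU').1
  have yu : y ∉ u1 ∧ y ∉ u2 := by rw [hu] at ns; exact notMem_of_nodup ns
  have yw : y ∉ w := (List.nodup_cons.1 (List.nodup_cons.1 nV').2).1
  have ew' : e ∉ w := fun h => ew (by simp [h])
  have mapid : ∀ l : List L, e ∉ l → y ∉ l → l.map (Equiv.swap e y) = l := by
    intro l h1 h2
    conv_rhs => rw [← List.map_id l]
    apply List.map_congr_left
    intro b hb
    exact Equiv.swap_apply_of_ne_of_ne (fun h => h1 (h ▸ hb)) (fun h => h2 (h ▸ hb))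
  have ren : (a0 :: (u1 ++ y :: e :: u2), e :: (w ++ [a0, y])) =
      mp (Equiv.swap e y) (a0 :: (u1 ++ e :: y :: u2), y :: (w ++ [a0, e])) := by
    simp [mp, mapid _ eu1 yu.1, mapid _ eu2 yu.2, mapid _ ew' yw,
      Equiv.swap_apply_of_ne_of_ne hea.symm nya.symm]
  have path4 : Reach (a0 :: (u1 ++ e :: y :: u2), y :: (w ++ [a0, e]))
      (a0 :: (u1 ++ e :: y :: u2), (w1 ++ x :: e :: w2) ++ [a0]) := by
    have e1 : y :: (w ++ [a0, e]) = w1 ++ x :: (w2 ++ [a0] ++ [e]) := by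
      have : y :: (w ++ [a0, e]) = (y :: w) ++ [a0, e] := by simp
      rw [this, hw2]; simp
    rw [e1, hx]
    have := reach_r0 (a0 :: (u1 ++ e :: Pl)) x w1 (T := w2 ++ [a0] ++ [e]) (T' := e :: (w2 ++ [a0]))
      (rot_one _ _).symm
    simpa using this
  refine ⟨u1 ++ e :: y :: u2, w1 ++ x :: e :: w2, ?_, ?_, ?_, ?_⟩
  · have v3 := (path1.trans (path2.trans path3)).valid hv
    constructor
    · refine v3.1.perm ?_
      exact List.Perm.cons _ (List.Perm.append_left _ (List.Perm.swap _ _ _))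
    · refine v3.2.perm ?_
      have e1 : (w1 ++ x :: e :: w2) ++ [a0] = (w1 ++ [x]) ++ e :: (w2 ++ [a0]) := by simp
      have : (w ++ [a0, y]).Perm (w1 ++ [x] ++ (w2 ++ [a0])) := by
        have e2 : w1 ++ [x] ++ (w2 ++ [a0]) = (y :: w) ++ [a0] := by rw [hw2]; simp
        rw [e2]
        have := (rot_one y (w ++ [a0])).perm.symm
        simpa using this
      show (e :: (w ++ [a0, y])).Perm (w1 ++ x :: e :: w2 ++ [a0])
      rw [e1]
      exact (List.Perm.cons e this).trans List.perm_middle.symm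
  · rw [ins_before nS1, ← hu]
  · rw [ins_after nS2, ← hw2]
  · have q1 := h3.trans ((path1.trans (path2.trans path3)).map σ)
    rw [ren] at q1
    have q2 := q1.trans ((path4.map (Equiv.swap e y)).map σ)
    rw [mp_mp, ← Equiv.Perm.coe_mul] at q2
    exact q2
end CC
end RZ

namespace RZ
open Relation
set_option linter.unusedSectionVars false
set_option linter.unusedSimpArgs false
set_option linter.unusedVariables false

section DD
variable {L : Type*} [DecidableEq L] [Fintype L]

lemma sign_mul_swap {σ : Equiv.Perm L} {e y : L} (h : y ≠ e) :
    Equiv.Perm.sign (σ * Equiv.swap e y) = - Equiv.Perm.sign σ := by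
  rw [Equiv.Perm.sign_mul, Equiv.Perm.sign_swap h.symm]; simp

lemma halfD {p0 : List L × List L} {a0 e α γ : L} {τh βh σ : Equiv.Perm L}
    (hea : e ≠ a0) (hτ : τh e = e) (hβ : βh e = e) (hα : α ≠ e)
    (h : C p0 a0 (Equiv.swap e α * τh) (Equiv.swap e γ * βh) σ) :
    C p0 a0 (Equiv.swap e γ * τh) (Equiv.swap e ((τh * βh⁻¹)⁻¹ α) * βh)
      (σ * Equiv.swap e γ) := by
  have h1 : (Equiv.swap e α * τh) e = α := by simp [hτ]
  have h2 : (Equiv.swap e γ * βh) e = γ := by simp [hβ]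
  have := half h hea (by rw [h1]; exact hα)
  rw [h1, h2, Equiv.swap_mul_self_mul, Equiv.swap_mul_self_mul] at this
  simpa using this

lemma flipIter {p0 : List L × List L} {a0 e : L} {τh βh : Equiv.Perm L}
    (hea : e ≠ a0) (hτ : τh e = e) (hβ : βh e = e) (m : ℕ) : ∀ {α γ : L} {σ : Equiv.Perm L},
    α ≠ e → γ ≠ e →
    C p0 a0 (Equiv.swap e α * τh) (Equiv.swap e γ * βh) σ →
    ∃ σ' : Equiv.Perm L, Equiv.Perm.sign σ' = Equiv.Perm.sign σ ∧
    C p0 a0 (Equiv.swap e (((τh * βh⁻¹)⁻¹ ^ m) α) * τh)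
      (Equiv.swap e (((τh * βh⁻¹)⁻¹ ^ m) γ) * βh) σ' := by
  have fixe : ∀ x, x ≠ e → (τh * βh⁻¹)⁻¹ x ≠ e := by
    intro x hx h
    apply hx
    rw [Equiv.Perm.inv_eq_iff_eq] at h
    rw [h, Equiv.Perm.mul_apply]
    have : βh⁻¹ e = e := by rw [Equiv.Perm.inv_eq_iff_eq, hβ]
    rw [this, hτ]
  induction m with
  | zero => intro α γ σ _ _ h; exact ⟨σ, rfl, by simpa using h⟩
  | succ m ih =>
    intro α γ σ hα hγ h
    have h1 := halfD hea hτ hβ hα h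
    have h2 := halfD hea hτ hβ hγ h1
    obtain ⟨σ', hs, h3⟩ := ih (fixe _ hα) (fixe _ hγ) h2
    refine ⟨σ', ?_, ?_⟩
    · rw [hs, sign_mul_swap (fixe _ hα), sign_mul_swap hγ, neg_neg]
    · rw [pow_succ]; exact h3

lemma flip {p0 : List L × List L} {a0 e : L} {τh βh : Equiv.Perm L}
    (hea : e ≠ a0) (hτ : τh e = e) (hβ : βh e = e) (m : ℕ) {α γ : L} {σ : Equiv.Perm L}
    (hα : α ≠ e) (hγ : γ ≠ e) (hm : γ = ((τh * βh⁻¹) ^ m) α)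
    (h : C p0 a0 (Equiv.swap e α * τh) (Equiv.swap e γ * βh) σ) :
    ∃ σ' : Equiv.Perm L, Equiv.Perm.sign σ' = - Equiv.Perm.sign σ ∧
    C p0 a0 (Equiv.swap e α * τh)
      (Equiv.swap e (((τh * βh⁻¹)⁻¹ ^ (m + 1)) α) * βh) σ' := by
  obtain ⟨σ', hs, h1⟩ := flipIter hea hτ hβ m hα hγ h
  have e1 : ((τh * βh⁻¹)⁻¹ ^ m) γ = α := by
    rw [inv_pow, Equiv.Perm.inv_eq_iff_eq, hm]
  rw [e1] at h1
  have hx : ((τh * βh⁻¹)⁻¹ ^ m) α ≠ e := by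
    intro h
    have : ((τh * βh⁻¹) ^ m) e = e := by
      rw [pow_eq_iterate]
      apply Function.iterate_fixed
      rw [Equiv.Perm.mul_apply]
      have : βh⁻¹ e = e := by rw [Equiv.Perm.inv_eq_iff_eq, hβ]
      rw [this, hτ]
    rw [inv_pow, Equiv.Perm.inv_eq_iff_eq, this] at h
    exact hα h
  have h2 := halfD hea hτ hβ hx h1
  refine ⟨σ' * Equiv.swap e α, ?_, ?_⟩
  · rw [sign_mul_swap hα, hs]
  · rw [← Equiv.Perm.mul_apply, ← pow_succ'] at h2
    exact h2

lemma bad_step {p0 : List L × List L} {a0 : L} (n : ℕ) : ∀ (τ β σ : Equiv.Perm L) (a b : L),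
    C p0 a0 τ β σ → a ≠ a0 → b ≠ a0 → b = (τ ^ n) a → ¬ (τ * β⁻¹).SameCycle a b →
    per (τ * β⁻¹) a = per (τ * β⁻¹) b → ∃ s ∈ GG p0, Equiv.Perm.sign s = -1 := by
  induction n with
  | zero =>
    intro τ β σ a b _ _ _ hb hn _
    exact absurd (by rw [hb]; exact Equiv.Perm.SameCycle.refl _ _) hn
  | succ n ih =>
    intro τ β σ a b hC ha hb hab hn hper
    have hab' : b = (τ ^ n) (τ a) := by rw [hab, pow_succ, Equiv.Perm.mul_apply]
    have hτa : τ a ≠ a := by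
      intro h
      apply hn
      have : b = a := by
        rw [hab, pow_eq_iterate]; exact Function.iterate_fixed h _
      rw [this]
    have hτ0 : τ a0 = a0 ∧ β a ≠ a := by
      obtain ⟨U, V, hv, h1, h2, h3⟩ := hC
      obtain ⟨nU, nV, aU, aV, mU, mV⟩ := std_nodup hv
      constructor
      · rw [← h1]; exact List.formPerm_apply_of_notMem aU
      · rw [← h2, List.formPerm_apply_mem_ne_self_iff V nV a (mV a ha),
          ← (std_perm hv).length_eq, ← List.formPerm_apply_mem_ne_self_iff U nU a (mU a ha), h1]
        exact hτa
    have hτa0 : τ a ≠ a0 := by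
      intro h
      exact ha (τ.injective (h.trans hτ0.1.symm))
    by_cases hsc : (τ * β⁻¹).SameCycle a (τ a)
    · exact ih τ β σ (τ a) b hC hτa0 hb hab'
        (fun h => hn (hsc.trans h)) (by rw [← per_sameCycle hsc, hper])
    · set κ := τ * β⁻¹ with hκ
      have hκγ : κ (β a) = τ a := by simp [hκ]
      have hsur := surgery hκγ hτa hτ0.2 (fun h => hsc h.symm)
      simp only at hsur
      set kh := Equiv.swap a (τ a) * κ * Equiv.swap a (β a) with hkh
      obtain ⟨s1, s2, s3, s4⟩ := hsur
      set τh := Equiv.swap a (τ a) * τ with hτh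
      set βh := Equiv.swap a (β a) * β with hβh
      have ekh : τh * βh⁻¹ = kh := by
        rw [hτh, hβh, hkh, hκ, mul_inv_rev, Equiv.swap_inv]
        simp only [mul_assoc]
      have eτ : Equiv.swap a (τ a) * τh = τ := by rw [hτh, Equiv.swap_mul_self_mul]
      have eβ : Equiv.swap a (β a) * βh = β := by rw [hβh, Equiv.swap_mul_self_mul]
      have hd := per_pos κ (τ a)
      obtain ⟨σ', hs', hC'⟩ := flip (p0 := p0) (a0 := a0) (e := a) (τh := τh) (βh := βh) (σ := σ) ha
        (by simp [hτh]) (by simp [hβh]) (per κ (τ a) - 1) hτa hτ0.2 (by rw [ekh]; exact s1)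
        (by rw [eτ, eβ]; exact hC)
      rw [eτ, ekh, Nat.sub_add_cancel hd] at hC'
      by_cases hpp : per κ a = per κ (τ a)
      · rw [s2 hpp, eβ] at hC'
        refine ⟨_, C_unique hC hC', ?_⟩
        rw [Equiv.Perm.sign_mul, hs', Equiv.Perm.sign_inv]
        rcases Int.units_eq_one_or (Equiv.Perm.sign σ) with h | h <;> simp [h]
      · have ek'' : τ * (Equiv.swap a ((kh⁻¹ ^ per κ (τ a)) (τ a)) * βh)⁻¹ =
            Equiv.swap a (τ a) * kh * Equiv.swap a ((kh⁻¹ ^ per κ (τ a)) (τ a)) := by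
          rw [mul_inv_rev, Equiv.swap_inv, ← mul_assoc, ← ekh, ← mul_assoc, eτ]
        have hbα : ¬ κ.SameCycle b (τ a) := by
          intro h
          apply hpp
          rw [hper, per_sameCycle h]
        have hp := s4 b (fun h => hn h.symm) hbα
        refine ih τ _ σ' (τ a) b hC' hτa0 hb hab' ?_ ?_
        · rw [ek'']
          intro h
          obtain ⟨i, hi⟩ := h.symm.exists_nat_pow_eq
          rw [hp] at hi
          exact hbα ⟨i, by simpa using hi⟩
        · rw [ek'', s3, per_congr hp, hper]
end DD

section Std
variable {L : Type*} [DecidableEq L] [Fintype L]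

/-- representative letters in a standard pair -/
def gr (a0 u v : L) : Option L → L
  | none => u
  | some c => if c = a0 then v else c

lemma formPerm_mid {u v : List L} {c h : L} {t : List L} (hn : (u ++ c :: v).Nodup)
    (hh : u ++ c :: v = h :: t) : (u ++ c :: v).formPerm c = (v.head?).getD h := by
  rcases v with _ | ⟨d, v⟩
  · simpa using formPerm_last hh rfl
  · have r : (u ++ c :: d :: v) ~r (c :: d :: (v ++ u)) := by
      simpa using rot_swap u (c :: d :: v)
    rw [List.formPerm_eq_of_isRotated hn r, List.formPerm_apply_head _ _ _ (r.nodup_iff.1 hn)]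
    rfl

lemma gr_top {a0 u v c : L} {U V : List L} (h : Valid (a0 :: (u :: U), V ++ [a0]))
    (hc : c ≠ a0) : gr a0 u v (nxt (a0 :: (u :: U)) (some c)) = (u :: U).formPerm c := by
  obtain ⟨nU, nV, aU, aV, mU, mV⟩ := std_nodup h
  obtain ⟨s, t, hs⟩ := List.append_of_mem (mU c hc)
  have n' := nU
  rw [hs] at n'
  have := formPerm_mid n' hs.symm
  rw [hs, this]
  have e1 : a0 :: (s ++ c :: t) = (a0 :: s) ++ c :: t := rfl
  rw [e1, nxt_mid (by simp [hc, (notMem_of_nodup n').1])]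
  rcases t with _ | ⟨d, t⟩
  · rfl
  · have : d ≠ a0 := by rintro rfl; exact aU (by rw [hs]; simp)
    simp [gr, this]

lemma gr_bot {a0 u v c : L} {U V : List L} (h : Valid (a0 :: U, (v :: V) ++ [a0]))
    (hc : c ≠ a0) : gr a0 u v (nxt ((v :: V) ++ [a0]) (some c)) = (v :: V).formPerm c := by
  obtain ⟨nU, nV, aU, aV, mU, mV⟩ := std_nodup h
  obtain ⟨s, t, hs⟩ := List.append_of_mem (mV c hc)
  have n' := nV
  rw [hs] at n'
  have := formPerm_mid n' hs.symm
  rw [hs, this]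
  rw [List.append_assoc, List.cons_append, nxt_mid (notMem_of_nodup n').1]
  rcases t with _ | ⟨d, t⟩
  · simp [gr]
  · have : d ≠ a0 := by rintro rfl; exact aV (by rw [hs]; simp)
    simp [gr, this]

lemma gr_Vt {a0 u v : L} {U V : List L} (h : Valid (a0 :: (u :: U), (v :: V) ++ [a0]))
    (x : Option L) : Vt (a0 :: (u :: U), (v :: V) ++ [a0]) x (some (gr a0 u v x)) := by
  rcases x with _ | c
  · have := Vt.nxt (a0 :: (u :: U), (v :: V) ++ [a0]) (some a0)
    simp only at this
    rw [nxt_last h.2.1, show a0 :: u :: U = [] ++ a0 :: u :: U from rfl, nxt_mid (by simp)] at this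
    exact this.symm
  · by_cases hc : c = a0
    · subst hc
      have := Vt.nxt (c :: (u :: U), (v :: V) ++ [c]) none
      simpa [gr, nxt] using this
    · simp only [gr, hc, if_false]; exact Vt.refl _ _

lemma gr_ne {a0 u v : L} {U V : List L} (h : Valid (a0 :: (u :: U), (v :: V) ++ [a0]))
    (x : Option L) : gr a0 u v x ≠ a0 := by
  obtain ⟨nU, nV, aU, aV, mU, mV⟩ := std_nodup h
  simp at aU aV
  rcases x with _ | c
  · exact fun h => aU.1 h.symm
  · simp only [gr]
    split_ifs with hc
    · exact fun h => aV.1 h.symm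
    · exact hc

lemma std_Vt {a0 u v : L} {U V : List L} (h : Valid (a0 :: (u :: U), (v :: V) ++ [a0])) {a b : L}
    (ha : a ≠ a0) (hb : b ≠ a0) :
    Vt (a0 :: (u :: U), (v :: V) ++ [a0]) (some a) (some b) ↔
      ((u :: U).formPerm * ((v :: V).formPerm)⁻¹).SameCycle a b := by
  set τ := (u :: U).formPerm with hτ
  set β := (v :: V).formPerm with hβ
  obtain ⟨nU, nV, aU, aV, mU, mV⟩ := std_nodup h
  constructor
  · intro H
    have adm : Adm (a0 :: (u :: U), (v :: V) ++ [a0])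
        (fun x => (τ * β⁻¹).SameCycle a (gr a0 u v x)) := by
      intro α
      simp only [eq_iff_iff]
      rcases α with _ | c
      · have hv : v ≠ a0 := by rintro rfl; exact aV (by simp)
        simp [nxt, gr, hv]
      · by_cases hc : c = a0
        · subst hc
          have hu : u ≠ c := by rintro rfl; exact aU (by simp)
          rw [nxt_last h.2.1, show c :: u :: U = [] ++ c :: u :: U from rfl, nxt_mid (by simp)]
          simp [gr, hu]
        · rw [gr_top h hc, gr_bot h hc, ← hτ, ← hβ]
          have : τ c = (τ * β⁻¹) (β c) := by simp
          rw [this, Equiv.Perm.sameCycle_apply_right]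
    have := H _ adm
    simp only [gr, ha, hb, if_false] at this
    rw [← this]
  · intro H
    have step : ∀ c, c ≠ a0 → Vt (a0 :: (u :: U), (v :: V) ++ [a0]) (some c) (some ((τ * β⁻¹) c)) := by
      intro c hc
      have hd : β⁻¹ c ≠ a0 := by
        intro e
        rw [Equiv.Perm.inv_eq_iff_eq, hβ, List.formPerm_apply_of_notMem aV] at e
        exact hc e
      have e1 := Vt.nxt (a0 :: (u :: U), (v :: V) ++ [a0]) (some (β⁻¹ c))
      have e2 := gr_Vt h (nxt (a0 :: (u :: U)) (some (β⁻¹ c)))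
      have e3 := gr_Vt h (nxt ((v :: V) ++ [a0]) (some (β⁻¹ c)))
      rw [gr_top h hd] at e2
      have e4 : β (β⁻¹ c) = c := by simp
      rw [gr_bot h hd, ← hβ, e4] at e3
      exact e3.symm.trans (e1.symm.trans e2)
    obtain ⟨i, rfl⟩ := H.exists_nat_pow_eq
    clear hb H
    have hfix : (τ * β⁻¹) a0 = a0 := by
      have : β⁻¹ a0 = a0 := by
        rw [Equiv.Perm.inv_eq_iff_eq, hβ, List.formPerm_apply_of_notMem aV]
      rw [Equiv.Perm.mul_apply, this, hτ, List.formPerm_apply_of_notMem aU]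
    have key : ∀ i : ℕ, ((τ * β⁻¹) ^ i) a ≠ a0 ∧
        Vt (a0 :: (u :: U), (v :: V) ++ [a0]) (some a) (some (((τ * β⁻¹) ^ i) a)) := by
      intro i
      induction i with
      | zero => exact ⟨ha, Vt.refl _ _⟩
      | succ i ih =>
        rw [pow_succ', Equiv.Perm.mul_apply]
        refine ⟨fun e => ih.1 ((τ * β⁻¹).injective (e.trans hfix.symm)), ih.2.trans (step _ ih.1)⟩
    exact (key i).2

lemma std_len {a0 u v : L} {U V : List L} (h : Valid (a0 :: (u :: U), (v :: V) ++ [a0])) {a : L}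
    (ha : a ≠ a0) :
    len (a0 :: (u :: U), (v :: V) ++ [a0]) (some a) =
      per ((u :: U).formPerm * ((v :: V).formPerm)⁻¹) a := by
  obtain ⟨nU, nV, aU, aV, mU, mV⟩ := std_nodup h
  rw [← ncard_sameCycle, len]
  congr 1
  ext b
  simp only [Set.mem_ofPred_eq, nxt, List.head?_cons, ne_eq, Option.some.injEq]
  constructor
  · rintro ⟨hb, H⟩; exact (std_Vt h ha hb).1 H
  · intro H
    have hb : b ≠ a0 := by
      rintro rfl
      apply ha
      refine (H.symm.eq_of_left ?_).symm
      show _ = _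
      have : ((v :: V).formPerm)⁻¹ b = b := by
        rw [Equiv.Perm.inv_eq_iff_eq, List.formPerm_apply_of_notMem aV]
      rw [Equiv.Perm.mul_apply, this, List.formPerm_apply_of_notMem aU]
    exact ⟨hb, (std_Vt h ha hb).2 H⟩

theorem part3 [Nontrivial L] {p : List L × List L} (hv : Valid p) (hi : Irr p) (hs : ¬ Simp p) :
    ∃ s ∈ GG p, Equiv.Perm.sign s = -1 := by
  obtain ⟨a0, U, V, h⟩ := exists_std hv hi
  have hv1 := h.valid hv
  have hs1 : ¬ Simp (a0 :: U, V ++ [a0]) := fun H => hs (Simp_reach h hv H)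
  obtain ⟨c, hc⟩ := exists_ne a0
  obtain ⟨nU, nV, aU, aV, mU, mV⟩ := std_nodup hv1
  rcases U with _ | ⟨u, U⟩
  · exact absurd (mU c hc) (by simp)
  rcases V with _ | ⟨v, V⟩
  · exact absurd (mV c hc) (by simp)
  unfold Simp at hs1
  push Not at hs1
  obtain ⟨x, y, hxy, hn⟩ := hs1
  have gx := gr_Vt hv1 x
  have gy := gr_Vt hv1 y
  have nx := gr_ne hv1 x
  have ny := gr_ne hv1 y
  rw [gx.len_eq, gy.len_eq, std_len hv1 nx, std_len hv1 ny] at hxy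
  have hn' : ¬ Vt (a0 :: (u :: U), (v :: V) ++ [a0]) (some (gr a0 u v x)) (some (gr a0 u v y)) :=
    fun H => hn (gx.trans (H.trans gy.symm))
  have hne : gr a0 u v x ≠ gr a0 u v y := fun e => hn' (by rw [e]; exact Vt.refl _ _)
  rw [std_Vt hv1 nx ny] at hn'
  have l2 : 2 ≤ (u :: U).length := by
    by_contra hl
    have : U = [] := by
      rcases U with _ | ⟨d, U⟩
      · rfl
      · simp at hl
    subst this
    have e1 := mU _ nx
    have e2 := mU _ ny
    simp at e1 e2
    exact hne (e1.trans e2.symm)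
  obtain ⟨n, hn2⟩ := (List.isCycle_formPerm nU l2).exists_pow_eq
    ((List.formPerm_apply_mem_ne_self_iff _ nU _ (mU _ nx)).2 l2)
    ((List.formPerm_apply_mem_ne_self_iff _ nU _ (mU _ ny)).2 l2)
  refine bad_step n (u :: U).formPerm (v :: V).formPerm 1 _ _ ?_ nx ny hn2.symm hn' hxy
  refine ⟨u :: U, v :: V, hv1, rfl, rfl, ?_⟩
  rw [Equiv.Perm.coe_one, mp_id]
  exact h
end Std
end RZ

namespace RZ
open Relation
set_option linter.unusedSectionVars false
set_option linter.unusedSimpArgs false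
set_option linter.unusedVariables false

section Bridge
variable {L : Type*} [DecidableEq L] {n : ℕ}

def lst (e : L ≃ Fin n) : List L := List.ofFn e.symm

lemma lst_length (e : L ≃ Fin n) : (lst e).length = n := by simp [lst]

lemma lst_full (e : L ≃ Fin n) : Full (lst e) := by
  constructor
  · exact List.nodup_ofFn.2 e.symm.injective
  · intro a
    rw [lst, List.mem_ofFn]
    exact ⟨e a, by simp⟩

lemma lst_pos {e : L ≃ Fin n} {u v : List L} {b : L} (h : lst e = u ++ b :: v) :
    (e b : ℕ) = u.length := by
  have hl : u.length < n := by
    have := congrArg List.length h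
    rw [lst_length] at this
    simp at this; omega
  have h1 : (lst e)[u.length]? = some b := by rw [h]; simp
  rw [lst, List.getElem?_ofFn] at h1
  simp only [hl, dite_true, Option.some.injEq] at h1
  have : e b = ⟨u.length, hl⟩ := by rw [← h1]; simp
  rw [this]

lemma lst_split (e : L ≃ Fin n) (b : L) : ∃ u v, lst e = u ++ b :: v ∧ (e b : ℕ) = u.length := by
  obtain ⟨u, v, h⟩ := List.append_of_mem ((lst_full e).2 b)
  exact ⟨u, v, h, lst_pos h⟩

lemma lst_inj {e e' : L ≃ Fin n} (h : lst e = lst e') : e = e' := by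
  have := List.ofFn_injective h
  have h2 : e.symm = e'.symm := Equiv.coe_fn_injective this
  rw [← e.symm_symm, h2, e'.symm_symm]

lemma lst_surj (e0 : L ≃ Fin n) {l : List L} (hl : Full l) : ∃ e : L ≃ Fin n, lst e = l := by
  have hlen : l.length = n := by
    rw [(full_perm hl (lst_full e0)).length_eq, lst_length]
  subst hlen
  have hb : Function.Bijective l.get :=
    ⟨List.nodup_iff_injective_get.1 hl.1, fun a => List.get_of_mem (hl.2 a)⟩
  refine ⟨(Equiv.ofBijective _ hb).symm, ?_⟩
  rw [lst, Equiv.symm_symm]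
  show List.ofFn l.get = l
  exact List.ofFn_get l

lemma lst_mem_left {e : L ≃ Fin n} {u v : List L} (h : lst e = u ++ v) (x : L) :
    x ∈ u ↔ (e x : ℕ) < u.length := by
  constructor
  · intro hx
    obtain ⟨s, t, rfl⟩ := List.append_of_mem hx
    rw [List.append_assoc, List.cons_append] at h
    rw [lst_pos h]; simp
  · intro hx
    have hm := (lst_full e).2 x
    rw [h, List.mem_append] at hm
    rcases hm with hm | hm
    · exact hm
    · obtain ⟨s, t, rfl⟩ := List.append_of_mem hm
      rw [← List.append_assoc] at h
      rw [lst_pos h] at hx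
      simp at hx

def MoveR (e e' : L ≃ Fin n) (zc zo : L) : Prop :=
  (∀ x, e x ≤ e zo) ∧ (∀ b, e b ≤ e zc → e' b = e b) ∧ ((e' zo : ℕ) = (e zc : ℕ) + 1) ∧
    (∀ b, ¬ e b ≤ e zc → b ≠ zo → (e' b : ℕ) = (e b : ℕ) + 1)

def MoveL (e e' : L ≃ Fin n) (ac ao : L) : Prop :=
  (∀ x, e ao ≤ e x) ∧ (∀ b, e ac ≤ e b → e' b = e b) ∧ ((e' ao : ℕ) = (e ac : ℕ) - 1) ∧
    (∀ b, ¬ e ac ≤ e b → b ≠ ao → (e' b : ℕ) = (e b : ℕ) - 1)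

lemma MoveR_of {e e' : L ≃ Fin n} {zc zo : L} {R T : List L}
    (h : lst e = R ++ zc :: (T ++ [zo])) (h' : lst e' = R ++ zc :: zo :: T) :
    MoveR e e' zc zo := by
  have hlen := congrArg List.length h
  rw [lst_length] at hlen
  simp at hlen
  have pzc := lst_pos h
  have pzo : (e zo : ℕ) = R.length + 1 + T.length := by
    rw [lst_pos (u := R ++ zc :: T) (v := []) (by rw [h]; simp)]; simp; omega
  have pzo' : (e' zo : ℕ) = R.length + 1 := by
    rw [lst_pos (u := R ++ [zc]) (v := T) (by rw [h']; simp)]; simp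
  refine ⟨?_, ?_, ?_, ?_⟩
  · intro x
    have := (e x).isLt
    rw [Fin.le_def]; omega
  · intro b hb
    rw [Fin.le_def] at hb
    apply Fin.ext
    have h1 : lst e = (R ++ [zc]) ++ (T ++ [zo]) := by rw [h]; simp
    have hm : b ∈ R ++ [zc] := (lst_mem_left h1 b).2 (by simp; omega)
    obtain ⟨s, t, hs⟩ := List.append_of_mem hm
    have h2 : lst e' = (R ++ [zc]) ++ (zo :: T) := by rw [h']; simp
    rw [hs, List.append_assoc, List.cons_append] at h1 h2
    rw [lst_pos h1, lst_pos h2]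
  · omega
  · intro b hb hbz
    rw [Fin.le_def] at hb
    have h1 : lst e = (R ++ [zc]) ++ (T ++ [zo]) := by rw [h]; simp
    have hm : b ∉ R ++ [zc] := fun hm => by
      have := (lst_mem_left h1 b).1 hm
      simp at this; omega
    have hm2 := (lst_full e).2 b
    rw [h1, List.mem_append] at hm2
    have hm3 : b ∈ T := by
      rcases hm2 with hm2 | hm2
      · exact absurd hm2 hm
      · simpa [hbz] using hm2
    obtain ⟨s, t, rfl⟩ := List.append_of_mem hm3
    rw [lst_pos (e := e) (u := R ++ zc :: s) (v := t ++ [zo]) (by rw [h]; simp),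
      lst_pos (e := e') (u := R ++ zc :: zo :: s) (v := t) (by rw [h']; simp)]
    simp; omega

lemma MoveR_unique {e e1 e2 : L ≃ Fin n} {zc zo : L} (h1 : MoveR e e1 zc zo)
    (h2 : MoveR e e2 zc zo) : e1 = e2 := by
  ext b
  by_cases hb : e b ≤ e zc
  · rw [h1.2.1 b hb, h2.2.1 b hb]
  · by_cases hz : b = zo
    · rw [hz, h1.2.2.1, h2.2.2.1]
    · rw [h1.2.2.2 b hb hz, h2.2.2.2 b hb hz]

lemma MoveR_iff {e e' : L ≃ Fin n} {zc zo : L} : MoveR e e' zc zo ↔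
    ∃ R T, lst e = R ++ zc :: (T ++ [zo]) ∧ lst e' = R ++ zc :: zo :: T := by
  constructor
  · intro h
    obtain ⟨R, W, hR, hl⟩ := lst_split e zc
    have hne : zo ≠ zc := by
      rintro rfl
      have h1 := h.2.1 zo le_rfl
      have h2 := h.2.2.1
      rw [h1] at h2; omega
    rcases List.eq_nil_or_concat W with hW | ⟨T, y, hW⟩
    · subst hW
      have h1 := h.1 zc
      have hlen := congrArg List.length hR
      rw [lst_length] at hlen
      simp at hlen
      have h2 := (e zo).isLt
      rw [Fin.le_def] at h1
      exact absurd (e.injective (Fin.ext (by omega : (e zo : ℕ) = e zc))) hne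
    · rw [List.concat_eq_append] at hW
      have hy : y = zo := by
        have hlen := congrArg List.length hR
        rw [lst_length, hW] at hlen
        simp at hlen
        have py := lst_pos (e := e) (b := y) (u := R ++ zc :: T) (v := []) (by rw [hR, hW]; simp)
        simp at py
        have h1 := h.1 y
        have h2 := (e zo).isLt
        rw [Fin.le_def] at h1
        exact e.injective (Fin.ext (by omega))
      subst hy
      rw [hW] at hR
      have hf : Full (R ++ zc :: y :: T) := by
        have := (Step.r0 [] zc R T y).perm.2
        refine (lst_full e).perm ?_
        rw [hR]; exact this
      obtain ⟨e'', he⟩ := lst_surj e hf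
      have : e' = e'' := MoveR_unique h (MoveR_of hR he)
      exact ⟨R, T, hR, by rw [this, he]⟩
  · rintro ⟨R, T, h1, h2⟩; exact MoveR_of h1 h2

lemma MoveL_of {e e' : L ≃ Fin n} {ac ao : L} {R T : List L}
    (h : lst e = ao :: (T ++ ac :: R)) (h' : lst e' = T ++ ao :: ac :: R) :
    MoveL e e' ac ao := by
  have pao : (e ao : ℕ) = 0 := lst_pos (u := []) (v := T ++ ac :: R) h
  have pac : (e ac : ℕ) = T.length + 1 := by
    rw [lst_pos (u := ao :: T) (v := R) h]; simp
  have pao' := lst_pos h'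
  refine ⟨?_, ?_, ?_, ?_⟩
  · intro x
    rw [Fin.le_def]; omega
  · intro b hb
    rw [Fin.le_def] at hb
    apply Fin.ext
    have h1 : lst e = (ao :: T) ++ (ac :: R) := by rw [h]; simp
    have hm0 : b ∉ ao :: T := fun hm => by
      have := (lst_mem_left h1 b).1 hm
      simp at this; omega
    have hm2 := (lst_full e).2 b
    rw [h1, List.mem_append] at hm2
    have hm : b ∈ ac :: R := hm2.resolve_left hm0
    obtain ⟨s, t, hs⟩ := List.append_of_mem hm
    have h2 : lst e' = (T ++ [ao]) ++ (ac :: R) := by rw [h']; simp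
    rw [hs, ← List.append_assoc] at h1 h2
    rw [lst_pos h1, lst_pos h2]
    simp; omega
  · omega
  · intro b hb hbz
    rw [Fin.le_def] at hb
    have h1 : lst e = (ao :: T) ++ (ac :: R) := by rw [h]; simp
    have hm : b ∈ ao :: T := (lst_mem_left h1 b).2 (by simp; omega)
    have hm3 : b ∈ T := by simpa [hbz] using hm
    obtain ⟨s, t, rfl⟩ := List.append_of_mem hm3
    rw [lst_pos (e := e) (u := ao :: s) (v := t ++ ac :: R) (by rw [h]; simp),
      lst_pos (e := e') (u := s) (v := t ++ ao :: ac :: R) (by rw [h']; simp)]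
    simp

lemma MoveL_unique {e e1 e2 : L ≃ Fin n} {zc zo : L} (h1 : MoveL e e1 zc zo)
    (h2 : MoveL e e2 zc zo) : e1 = e2 := by
  ext b
  by_cases hb : e zc ≤ e b
  · rw [h1.2.1 b hb, h2.2.1 b hb]
  · by_cases hz : b = zo
    · rw [hz, h1.2.2.1, h2.2.2.1]
    · rw [h1.2.2.2 b hb hz, h2.2.2.2 b hb hz]

lemma MoveL_split {e e' : L ≃ Fin n} {ac ao : L} (h : MoveL e e' ac ao) : e' = e ∨
    ∃ T R, lst e = ao :: (T ++ ac :: R) ∧ lst e' = T ++ ao :: ac :: R := by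
  by_cases hne : ao = ac
  · left
    subst hne
    ext b
    rw [h.2.1 b (h.1 b)]
  · right
    obtain ⟨W, R, hR, hl⟩ := lst_split e ac
    rcases W with _ | ⟨y, T⟩
    · have h1 := h.1 ac
      rw [Fin.le_def] at h1
      simp at hl
      exact absurd (e.injective (Fin.ext (by omega : (e ao : ℕ) = e ac))) hne
    · have hy : y = ao := by
        have py := lst_pos (e := e) (b := y) (u := []) (v := T ++ ac :: R) hR
        simp at py
        have h1 := h.1 y
        rw [Fin.le_def] at h1
        exact e.injective (Fin.ext (by omega))
      subst hy
      have hf : Full (T ++ y :: ac :: R) := by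
        have := (Step.l0 ac [] y T R).perm.2
        refine (lst_full e).perm ?_
        rw [hR]; exact this
      obtain ⟨e'', he⟩ := lst_surj e hf
      have : e' = e'' := MoveL_unique h (MoveL_of hR he)
      exact ⟨T, R, hR, by rw [this, he]⟩
end Bridge

section Pairs
variable {A : Type*} [Fintype A] [DecidableEq A]

def toL (π : RPair A) : List A × List A := (lst (π false), lst (π true))

lemma toL_valid (π : RPair A) : Valid (toL π) := ⟨lst_full _, lst_full _⟩

lemma toL_inj {π π' : RPair A} (h : toL π = toL π') : π = π' := by
  simp only [toL, Prod.mk.injEq] at h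
  funext ε
  cases ε
  · exact lst_inj h.1
  · exact lst_inj h.2

lemma toL_surj (π : RPair A) {p : List A × List A} (h : Valid p) : ∃ ρ : RPair A, toL ρ = p := by
  obtain ⟨e0, h0⟩ := lst_surj (π false) h.1
  obtain ⟨e1, h1⟩ := lst_surj (π false) h.2
  refine ⟨fun ε => if ε then e1 else e0, ?_⟩
  simp [toL, h0, h1]

lemma toL_rename (π : RPair A) (ν : Equiv.Perm A) :
    toL (pairRename π ν) = mp (ν⁻¹ : Equiv.Perm A) (toL π) := by
  simp only [toL, mp, lst, pairRename, List.map_ofFn]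
  rfl

lemma last_split {e : A ≃ Fin (Fintype.card A)} {z : A} (h : ∀ x, e x ≤ e z) :
    ∃ P, lst e = P ++ [z] := by
  obtain ⟨u, v, h1, h2⟩ := lst_split e z
  rcases v with _ | ⟨c, v⟩
  · exact ⟨u, h1⟩
  · have h3 : lst e = (u ++ [z]) ++ c :: v := by rw [h1]; simp
    have h4 := lst_pos h3
    have h5 := h c
    rw [Fin.le_def] at h5
    simp at h4; omega

lemma last_of {e : A ≃ Fin (Fintype.card A)} {z : A} {P : List A} (h : lst e = P ++ [z]) (x : A) :
    e x ≤ e z := by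
  have h1 := lst_pos h
  have h2 := congrArg List.length h
  rw [lst_length] at h2
  simp at h2
  have := (e x).isLt
  rw [Fin.le_def]; omega

lemma first_splitE {e : A ≃ Fin (Fintype.card A)} {z : A} (h : ∀ x, e z ≤ e x) :
    ∃ P, lst e = z :: P := by
  obtain ⟨u, v, h1, h2⟩ := lst_split e z
  rcases u with _ | ⟨c, u⟩
  · exact ⟨v, h1⟩
  · have h4 := lst_pos (e := e) (u := []) h1
    have h5 := h c
    rw [Fin.le_def] at h5
    simp at h4 h2; omega

lemma first_of {e : A ≃ Fin (Fintype.card A)} {z : A} {P : List A} (h : lst e = z :: P) (x : A) :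
    e z ≤ e x := by
  have h1 := lst_pos (u := []) h
  rw [Fin.le_def]
  simp at h1; omega

lemma right_reach {π π' : RPair A} (h : RightMove π π') : Reach (toL π) (toL π') := by
  obtain ⟨ε, zc, zo, h1, h2, h3, h4, h5, h6⟩ := h
  obtain ⟨P, hP⟩ := last_split h1
  obtain ⟨R, T, hR, hR'⟩ := MoveR_iff.1 (⟨h2, h4, h5, h6⟩ : MoveR (π (!ε)) (π' (!ε)) zc zo)
  cases ε
  · simp only [Bool.not_false] at *
    rw [toL, toL, h3, hP, hR, hR']
    exact ReflTransGen.single (Step.r0 P zc R T zo)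
  · simp only [Bool.not_true] at *
    rw [toL, toL, h3, hP, hR, hR']
    exact ReflTransGen.single (Step.r1 P zc R T zo)

lemma left_reach {π π' : RPair A} (h : LeftMove π π') : Reach (toL π) (toL π') := by
  obtain ⟨ε, zc, zo, h1, h2, h3, h4, h5, h6⟩ := h
  obtain ⟨P, hP⟩ := first_splitE h1
  rcases MoveL_split (⟨h2, h4, h5, h6⟩ : MoveL (π (!ε)) (π' (!ε)) zc zo) with he | ⟨T, R, hR, hR'⟩
  · have : π' = π := by
      funext δ
      cases ε <;> cases δ <;> first | exact h3 | exact he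
    rw [this]; exact Reach.refl _
  · cases ε
    · simp only [Bool.not_false] at *
      rw [toL, toL, h3, hP, hR, hR']
      exact ReflTransGen.single (Step.l0 zc P zo T R)
    · simp only [Bool.not_true] at *
      rw [toL, toL, h3, hP, hR, hR']
      exact ReflTransGen.single (Step.l1 zc P zo T R)

lemma step_move {p q : List A × List A} (h : Step p q) : ∀ {π π' : RPair A},
    p = toL π → q = toL π' → RightMove π π' ∨ LeftMove π π' := by
  intro π π' hp hq
  cases h with
  | r0 P z R T y =>
    simp only [toL, Prod.mk.injEq] at hp hq
    obtain ⟨m1, m2, m3, m4⟩ := MoveR_of hp.2.symm hq.2.symm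
    exact Or.inl ⟨false, z, y, last_of hp.1.symm, m1, lst_inj (hq.1.symm.trans hp.1), m2, m3, m4⟩
  | r1 P z R T y =>
    simp only [toL, Prod.mk.injEq] at hp hq
    obtain ⟨m1, m2, m3, m4⟩ := MoveR_of hp.1.symm hq.1.symm
    exact Or.inl ⟨true, z, y, last_of hp.2.symm, m1, lst_inj (hq.2.symm.trans hp.2), m2, m3, m4⟩
  | l0 a P y T R =>
    simp only [toL, Prod.mk.injEq] at hp hq
    obtain ⟨m1, m2, m3, m4⟩ := MoveL_of hp.2.symm hq.2.symm
    exact Or.inr ⟨false, a, y, first_of hp.1.symm, m1, lst_inj (hq.1.symm.trans hp.1), m2, m3, m4⟩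
  | l1 a P y T R =>
    simp only [toL, Prod.mk.injEq] at hp hq
    obtain ⟨m1, m2, m3, m4⟩ := MoveL_of hp.1.symm hq.1.symm
    exact Or.inr ⟨true, a, y, first_of hp.2.symm, m1, lst_inj (hq.2.symm.trans hp.2), m2, m3, m4⟩

lemma mem_E {π ρ : RPair A} : ρ ∈ EClass π ↔ Reach (toL π) (toL ρ) := by
  constructor
  · intro h
    change ReflTransGen _ π ρ at h
    induction h with
    | refl => exact Reach.refl _
    | tail _ h ih => 
      rcases h with h | h
      · exact ih.trans (right_reach h)
      · exact ih.trans (left_reach h)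
  · intro h
    have key : ∀ q, Reach (toL π) q → ∀ ρ : RPair A, q = toL ρ → ρ ∈ EClass π := by
      intro q hq
      unfold Reach at hq
      induction hq with
      | refl => intro ρ h; rw [toL_inj h]; exact ReflTransGen.refl
      | @tail b c h1 h2 ih =>
        intro ρ hρ
        obtain ⟨ρ', hρ'⟩ := toL_surj π (Reach.valid h1 (toL_valid π))
        exact ReflTransGen.tail (ih ρ' hρ'.symm) (step_move h2 hρ'.symm hρ)
    exact key _ h ρ rfl

lemma toL_irr {π : RPair A} (h : PairIrreducible π) : Irr (toL π) := by
  intro u v u' v' e hp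
  simp only [toL, Prod.mk.injEq] at e
  by_contra hc
  push Not at hc
  obtain ⟨hu, hv⟩ := hc
  have lu : 0 < u.length := List.length_pos_iff.2 hu
  have lv : 0 < v.length := List.length_pos_iff.2 hv
  have hlen := congrArg List.length e.1
  rw [lst_length, List.length_append] at hlen
  have := h ⟨u.length - 1, by omega⟩ (by
    intro x hx
    rw [Fin.le_def] at hx ⊢
    simp only at hx ⊢
    have : x ∈ u := (lst_mem_left e.1 x).2 (by omega)
    have := (lst_mem_left e.2 x).1 (hp.mem_iff.1 this)
    rw [← hp.length_eq] at this
    omega)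
  simp only at this
  omega

lemma nonlabeled_rename (π : RPair A) (ν : Equiv.Perm A) :
    nonlabeled (pairRename π ν) = nonlabeled π := by
  ext x
  simp [nonlabeled, pairRename]

lemma rename_of_nonlabeled {ρ ρ' : RPair A} (h : nonlabeled ρ = nonlabeled ρ') :
    ∃ ν : Equiv.Perm A, ρ' = pairRename ρ ν := by
  refine ⟨(ρ' false).trans (ρ false).symm, ?_⟩
  funext ε
  apply Equiv.ext
  intro x
  cases ε
  · simp [pairRename]
  · have := congrArg (fun f => f (ρ' false x)) h
    simp [nonlabeled] at this
    simp [pairRename, this]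

lemma rename_inj {ρ : RPair A} {ν ν' : Equiv.Perm A} (h : pairRename ρ ν = pairRename ρ ν') :
    ν = ν' := by
  have := congrFun h false
  apply Equiv.ext
  intro x
  have h2 := congrArg (fun f => f x) this
  simpa [pairRename] using h2

lemma card_E (π : RPair A) :
    (EClass π).ncard = Nat.card (GG (toL π)) * (nonlabeled '' EClass π).ncard := by
  have hsec : ∀ q : Equiv.Perm (Fin (Fintype.card A)), ∃ ρ : RPair A,
      q ∈ nonlabeled '' EClass π → ρ ∈ EClass π ∧ nonlabeled ρ = q := by
    intro q
    by_cases h : q ∈ nonlabeled '' EClass π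
    · obtain ⟨ρ, h1, h2⟩ := h
      exact ⟨ρ, fun _ => ⟨h1, h2⟩⟩
    · exact ⟨π, fun h' => absurd h' h⟩
  choose s hs using hsec
  have himg : EClass π = (fun x : Equiv.Perm A × Equiv.Perm (Fin (Fintype.card A)) =>
      pairRename (s x.2) x.1⁻¹) '' ((GG (toL π) : Set (Equiv.Perm A)) ×ˢ (nonlabeled '' EClass π)) := by
    ext ρ
    constructor
    · intro hρ
      have hq : nonlabeled ρ ∈ nonlabeled '' EClass π := ⟨ρ, hρ, rfl⟩
      obtain ⟨h1, h2⟩ := hs _ hq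
      obtain ⟨ν, hν⟩ := rename_of_nonlabeled h2
      refine ⟨(ν⁻¹, nonlabeled ρ), ⟨?_, hq⟩, ?_⟩
      · show Reach (toL π) (mp (ν⁻¹ : Equiv.Perm A) (toL π))
        have e1 := mem_E.1 hρ
        rw [hν, toL_rename] at e1
        exact e1.trans ((mem_E.1 h1).map _).symm
      · simp only [inv_inv]; exact hν.symm
    · rintro ⟨⟨σ, q⟩, ⟨h1, h2⟩, rfl⟩
      obtain ⟨h3, h4⟩ := hs _ h2
      rw [mem_E]
      simp only
      rw [toL_rename, inv_inv]
      exact Reach.trans h1 ((mem_E.1 h3).map σ)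
  conv_lhs => rw [himg]
  rw [Set.InjOn.ncard_image, Set.ncard_prod]
  · rfl
  · rintro ⟨σ, q⟩ ⟨h1, h2⟩ ⟨σ', q'⟩ ⟨h1', h2'⟩ h
    simp only at h h2 h2'
    have e := congrArg nonlabeled h
    rw [nonlabeled_rename, nonlabeled_rename, (hs _ h2).2, (hs _ h2').2] at e
    subst e
    rw [inv_injective (rename_inj h)]
end Pairs
end RZ

namespace RZ
open Relation
set_option linter.unusedSectionVars false
set_option linter.unusedSimpArgs false
set_option linter.unusedVariables false

section Link
variable {A : Type*} [Fintype A] [DecidableEq A] [Nonempty A]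

lemma nxt_lst_some {n : ℕ} {e : A ≃ Fin n} {a b : A} (h : (e b : ℕ) = e a + 1) :
    nxt (lst e) (some a) = some b := by
  obtain ⟨u, v, h1, h2⟩ := lst_split e a
  have := lst_full e
  rw [h1] at this
  rw [h1, nxt_mid (notMem_of_nodup this.1).1]
  rcases v with _ | ⟨c, v⟩
  · have hlen := congrArg List.length h1
    rw [lst_length] at hlen
    simp at hlen
    have := (e b).isLt
    omega
  · have h3 : lst e = (u ++ [a]) ++ c :: v := by rw [h1]; simp
    have h4 := lst_pos h3
    have : c = b := e.injective (Fin.ext (by simp at h4; omega))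
    rw [this]; rfl

lemma nxt_lst_last {e : A ≃ Fin (Fintype.card A)} {a : A} (h : e a = posLast A) :
    nxt (lst e) (some a) = none := by
  obtain ⟨P, hP⟩ := last_split (e := e) (z := a) (by
    intro x; rw [h, Fin.le_def]
    have := (e x).isLt
    simp only [posLast]; omega)
  have := (lst_full e).1
  rw [hP] at this ⊢
  exact nxt_last this

lemma nxt_lst_none {e : A ≃ Fin (Fintype.card A)} {a : A} (h : e a = posFirst A) :
    nxt (lst e) none = some a := by
  obtain ⟨P, hP⟩ := first_splitE (e := e) (z := a) (by
    intro x; rw [h, Fin.le_def]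
    simp only [posFirst]; omega)
  rw [hP]; rfl

variable {π : RPair A} {S Q : Equiv.Perm A}

lemma pos_ne_first {e : A ≃ Fin (Fintype.card A)} {b : A} (h : e b ≠ posFirst A) :
    0 < (e b : ℕ) := by
  rcases Nat.eq_zero_or_pos (e b : ℕ) with h1 | h1
  · exact absurd (Fin.ext h1) h
  · exact h1

/-- basic consequences of irreducibility -/
lemma irr_basic (hN : 2 ≤ Fintype.card A) (hπ : PairIrreducible π) :
    (π true).symm (posFirst A) ≠ XOf π ∧
    (π false).symm (posLast A) ≠ (π true).symm (posLast A) := by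
  constructor
  · intro h
    have := hπ (posFirst A) (by
      intro x hx
      have h0 : π false x = posFirst A := le_antisymm hx (by rw [Fin.le_def]; simp [posFirst])
      have h1 : x = XOf π := by rw [XOf, ← h0]; simp
      rw [h1, ← h]; simp)
    simp [posFirst] at this
    omega
  · intro h
    have := hπ ⟨Fintype.card A - 2, by omega⟩ (by
      intro x hx
      rw [Fin.le_def] at hx ⊢
      simp only at hx ⊢
      by_contra hc
      have h1 : π true x = posLast A := by
        apply Fin.ext
        have := (π true x).isLt
        simp only [posLast]; omega
      have h2 : x = (π false).symm (posLast A) := by rw [h, ← h1]; simp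
      rw [h2] at hx
      simp [posLast] at hx
      omega)
    simp only at this
    omega

lemma succ_exists {e : A ≃ Fin (Fintype.card A)} {z : A} (h : z ≠ e.symm (posLast A)) :
    ∃ b, (e b : ℕ) = e z + 1 := by
  have : (e z : ℕ) + 1 < Fintype.card A := by
    by_contra hc
    apply h
    have : e z = posLast A := by
      apply Fin.ext
      have := (e z).isLt
      simp only [posLast]; omega
    rw [← this]; simp
  exact ⟨e.symm ⟨e z + 1, this⟩, by simp⟩

/-- the three cases of `S` -/
lemma S_cases (hS : IsS π S) (b : A) :
    (nxt (lst (π true)) none = some b ∧ nxt (lst (π false)) none = some (S b)) ∨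
    (nxt (lst (π true)) (some ((π false).symm (posLast A))) = some b ∧
      nxt (lst (π false)) (some ((π true).symm (posLast A))) = some (S b)) ∨
    (∃ d, d ≠ (π false).symm (posLast A) ∧ nxt (lst (π true)) (some d) = some b ∧
      nxt (lst (π false)) (some d) = some (S b)) := by
  obtain ⟨h1, h2⟩ := hS b
  by_cases hb : π true b = posFirst A
  · left
    exact ⟨nxt_lst_none hb, nxt_lst_none (by rw [h1 hb]; simp)⟩
  · right
    obtain ⟨h3, h4⟩ := h2 hb
    by_cases hc : (π true b : ℕ) = (π true ((π false).symm (posLast A)) : ℕ) + 1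
    · left
      exact ⟨nxt_lst_some hc, nxt_lst_some (h3 hc)⟩
    · right
      have hpos := pos_ne_first hb
      refine ⟨_, ?_, nxt_lst_some ?_, nxt_lst_some (h4 hc)⟩
      · intro e
        apply hc
        rw [← e]
        simp; omega
      · simp; omega

lemma Vt_S_step (hS : IsS π S) (b : A) : Vt (toL π) (some b) (some (S b)) := by
  rcases S_cases hS b with ⟨h1, h2⟩ | ⟨h1, h2⟩ | ⟨d, _, h1, h2⟩
  · have := Vt.nxt (toL π) none
    simp only [toL] at this
    rw [h1, h2] at this
    exact this.symm
  · have e1 := Vt.nxt (toL π) (some ((π false).symm (posLast A)))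
    have e2 := Vt.nxt (toL π) (some ((π true).symm (posLast A)))
    simp only [toL] at e1 e2
    rw [h1, nxt_lst_last (by simp)] at e1
    rw [h2, nxt_lst_last (by simp)] at e2
    exact e1.symm.trans e2.symm
  · have := Vt.nxt (toL π) (some d)
    simp only [toL] at this
    rw [h1, h2] at this
    exact this.symm

lemma Vt_S (hN : 2 ≤ Fintype.card A) (hπ : PairIrreducible π) (hS : IsS π S) (a b : A) :
    Vt (toL π) (some a) (some b) ↔ S.SameCycle a b := by
  constructor
  · intro H
    obtain ⟨hX, hz⟩ := irr_basic hN hπ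
    obtain ⟨c0, hc0⟩ := succ_exists (e := π true) hz
    obtain ⟨c1, hc1⟩ := succ_exists (e := π false) hz.symm
    have n0 := nxt_lst_some hc0
    have n1 := nxt_lst_some hc1
    -- surjectivity of cases
    have S1 : S c0 = c1 := by
      rcases S_cases hS c0 with ⟨h1, h2⟩ | ⟨h1, h2⟩ | ⟨d, hd, h1, h2⟩
      · exfalso
        have h3 := nxt_lst_none (e := π true) (a := (π true).symm (posFirst A)) (by simp)
        rw [h3] at h1
        simp only [Option.some.injEq] at h1
        rw [← h1] at hc0
        simp [posFirst] at hc0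
      · rw [n1] at h2
        simpa using h2.symm
      · exfalso
        by_cases hl : π true d = posLast A
        · rw [nxt_lst_last hl] at h1; simp at h1
        · obtain ⟨c, hc⟩ := succ_exists (e := π true) (z := d) (by
            intro e; apply hl; rw [e]; simp)
          rw [nxt_lst_some hc] at h1
          simp only [Option.some.injEq] at h1
          rw [h1] at hc
          exact hd ((π true).injective (Fin.ext (by omega)))
    have adm : Adm (toL π) (fun x => S.SameCycle a (x.getD c0)) := by
      intro α
      simp only [eq_iff_iff]
      have hS' : ∀ c, S.SameCycle a (S c) ↔ S.SameCycle a c :=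
        fun c => Equiv.Perm.sameCycle_apply_right
      rcases α with _ | d
      · have h1 := nxt_lst_none (e := π true) (a := (π true).symm (posFirst A)) (by simp)
        have h2 := nxt_lst_none (e := π false) (a := (π false).symm (posFirst A)) (by simp)
        have h3 := (hS ((π true).symm (posFirst A))).1 (by simp)
        simp only [toL]
        rw [h1, h2]
        simp only [Option.getD_some]
        rw [← h3, hS']
      · simp only [toL]
        by_cases hd0 : d = (π false).symm (posLast A)
        · rw [hd0, n0, nxt_lst_last (by simp)]; rfl
        · by_cases hd1 : d = (π true).symm (posLast A)
          · rw [hd1, n1, nxt_lst_last (by simp)]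
            simp only [Option.getD_some, Option.getD_none]
            rw [← S1, hS']
          · obtain ⟨b1, hb1⟩ := succ_exists (e := π true) hd1
            obtain ⟨b0, hb0⟩ := succ_exists (e := π false) hd0
            rw [nxt_lst_some hb1, nxt_lst_some hb0]
            simp only [Option.getD_some]
            have : S b1 = b0 := by
              have hf : π true b1 ≠ posFirst A := by
                intro e; rw [e] at hb1; simp [posFirst] at hb1
              have h4 := ((hS b1).2 hf).2 (by
                intro e
                apply hd0
                exact (π true).injective (Fin.ext (by omega)))
              have e5 : (π true).symm ⟨(π true b1 : ℕ) - 1,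
                  Nat.lt_of_le_of_lt (Nat.sub_le _ _) (π true b1).isLt⟩ = d := by
                rw [Equiv.symm_apply_eq]
                apply Fin.ext
                simp; omega
              rw [e5, ← hb0] at h4
              exact (π false).injective (Fin.ext h4)
            rw [← this, hS']
    have := H _ adm
    simp only [Option.getD_some] at this
    rw [← this]
  · intro H
    obtain ⟨i, rfl⟩ := H.exists_nat_pow_eq
    clear H
    induction i with
    | zero => exact Vt.refl _ _
    | succ i ih =>
      rw [pow_succ', Equiv.Perm.mul_apply]
      exact ih.trans (Vt_S_step hS _)

lemma S_Q (hQ : IsQ π S Q) {a b : A} (ha : a ≠ XOf π) (hb : b ≠ XOf π) :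
    S.SameCycle a b ↔ Q.SameCycle a b := by
  obtain ⟨hX, hq⟩ := hQ
  constructor
  · intro H
    let h : A → Prop := fun c => Q.SameCycle a (if c = XOf π then S (XOf π) else c)
    have hinv : ∀ c, h (S c) ↔ h c := by
      intro c
      by_cases hc : c = XOf π
      · by_cases hc2 : S (XOf π) = XOf π
        · rw [hc, hc2]
        · simp [h, hc, hc2]
      · by_cases hc2 : S c = XOf π
        · have := (hq c hc).1 hc2
          rw [hc2] at this
          simp only [h, hc2, hc, if_true, if_false]
          rw [← this, Equiv.Perm.sameCycle_apply_right]
        · have := (hq c hc).2 hc2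
          simp only [h, hc2, hc, if_false]
          rw [← this, Equiv.Perm.sameCycle_apply_right]
    obtain ⟨i, rfl⟩ := H.exists_nat_pow_eq
    have key : ∀ i : ℕ, h ((S ^ i) a) := by
      intro i
      induction i with
      | zero => simp [h, ha, Equiv.Perm.SameCycle.refl]
      | succ i ih => rw [pow_succ', Equiv.Perm.mul_apply, hinv]; exact ih
    have := key i
    simpa [h, hb] using this
  · intro H
    obtain ⟨i, rfl⟩ := H.exists_nat_pow_eq
    clear H hb
    have key : ∀ i : ℕ, (Q ^ i) a ≠ XOf π ∧ S.SameCycle a ((Q ^ i) a) := by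
      intro i
      induction i with
      | zero => exact ⟨ha, Equiv.Perm.SameCycle.refl _ _⟩
      | succ i ih =>
        rw [pow_succ', Equiv.Perm.mul_apply]
        refine ⟨fun e => ih.1 (Q.injective (e.trans hX.symm)), ?_⟩
        by_cases hc : S ((Q ^ i) a) = XOf π
        · rw [(hq _ ih.1).1 hc]
          simpa using ih.2
        · rw [(hq _ ih.1).2 hc]
          simpa using ih.2
    exact (key i).2

lemma Vt_Q (hN : 2 ≤ Fintype.card A) (hπ : PairIrreducible π) (hS : IsS π S) (hQ : IsQ π S Q)
    {a b : A} (ha : a ≠ XOf π) (hb : b ≠ XOf π) :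
    Vt (toL π) (some a) (some b) ↔ Q.SameCycle a b := by
  rw [Vt_S hN hπ hS, S_Q hQ ha hb]

lemma len_Q (hN : 2 ≤ Fintype.card A) (hπ : PairIrreducible π) (hS : IsS π S) (hQ : IsQ π S Q)
    {a : A} (ha : a ≠ XOf π) : len (toL π) (some a) = per Q a := by
  rw [← ncard_sameCycle, len]
  congr 1
  ext b
  have h2 := nxt_lst_none (e := π false) (a := XOf π) (by simp [XOf])
  simp only [Set.mem_ofPred_eq, toL, h2, ne_eq, Option.some.injEq]
  constructor
  · rintro ⟨hb, H⟩; exact (Vt_Q hN hπ hS hQ ha hb).1 H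
  · intro H
    have hb : b ≠ XOf π := by
      rintro rfl
      exact ha (H.symm.eq_of_left hQ.1).symm
    exact ⟨hb, (Vt_Q hN hπ hS hQ ha hb).2 H⟩

lemma rep_Q (hN : 2 ≤ Fintype.card A) (hπ : PairIrreducible π) (x : Option A) :
    ∃ a, a ≠ XOf π ∧ Vt (toL π) x (some a) := by
  obtain ⟨hX, hz⟩ := irr_basic hN hπ
  rcases x with _ | c
  · obtain ⟨c1, hc1⟩ := succ_exists (e := π false) hz.symm
    have e2 := Vt.nxt (toL π) (some ((π true).symm (posLast A)))
    simp only [toL] at e2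
    rw [nxt_lst_some hc1, nxt_lst_last (by simp)] at e2
    refine ⟨c1, ?_, e2.symm⟩
    rintro rfl
    simp [XOf, posFirst] at hc1
  · by_cases hc : c = XOf π
    · refine ⟨_, hX, ?_⟩
      have := Vt.nxt (toL π) none
      simp only [toL] at this
      rw [nxt_lst_none (e := π false) (a := XOf π) (by simp [XOf]),
        nxt_lst_none (e := π true) (a := (π true).symm (posFirst A)) (by simp)] at this
      rw [hc]; exact this
    · exact ⟨c, hc, Vt.refl _ _⟩

lemma Simp_iff (hN : 2 ≤ Fintype.card A) (hπ : PairIrreducible π) (hS : IsS π S)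
    (hQ : IsQ π S Q) : Simp (toL π) ↔
      ∀ a b, a ≠ XOf π → b ≠ XOf π → per Q a = per Q b → Q.SameCycle a b := by
  constructor
  · intro H a b ha hb h
    rw [← Vt_Q hN hπ hS hQ ha hb]
    apply H
    rw [len_Q hN hπ hS hQ ha, len_Q hN hπ hS hQ hb, h]
  · intro H x y h
    obtain ⟨a, ha, hxa⟩ := rep_Q hN hπ x
    obtain ⟨b, hb, hyb⟩ := rep_Q hN hπ y
    refine hxa.trans (Vt.trans ?_ hyb.symm)
    rw [Vt_Q hN hπ hS hQ ha hb]
    apply H a b ha hb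
    rw [← len_Q hN hπ hS hQ ha, ← len_Q hN hπ hS hQ hb, ← hxa.len_eq, ← hyb.len_eq, h]
end Link

section Lam
variable {A : Type*} [Fintype A] [DecidableEq A]

lemma per_eq_one_iff {Q : Equiv.Perm A} {a : A} : per Q a = 1 ↔ Q a = a :=
  Function.minimalPeriod_eq_one_iff_isFixedPt

lemma per_eq_card {Q : Equiv.Perm A} {a : A} (h : Q a ≠ a) :
    per Q a = (Q.cycleOf a).support.card := by
  rw [← ncard_sameCycle, ← Set.ncard_coe_finset]
  congr 1
  ext b
  rw [Finset.mem_coe, Equiv.Perm.mem_support_cycleOf_iff]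
  exact ⟨fun hb => ⟨hb, Equiv.Perm.mem_support.2 h⟩, fun hb => hb.1⟩

lemma lam_iff {Q : Equiv.Perm A} {X : A} (hX : Q X = X) : (lamOf Q).Nodup ↔
    ∀ a b, a ≠ X → b ≠ X → per Q a = per Q b → Q.SameCycle a b := by
  have hXm : X ∈ Finset.univ.filter fun a => Q a = a := by simp [hX]
  have hcard : (Finset.univ.filter fun a => Q a = a).card - 1 =
      ((Finset.univ.filter fun a => Q a = a).erase X).card := by
    rw [Finset.card_erase_of_mem hXm]
  rw [lamOf, hcard, Multiset.nodup_add]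
  have hdis : Disjoint Q.cycleType
      (Multiset.replicate ((Finset.univ.filter fun a => Q a = a).erase X).card 1) := by
    rw [Multiset.disjoint_left]
    intro x hx hx'
    have := Equiv.Perm.two_le_of_mem_cycleType hx
    rw [Multiset.eq_of_mem_replicate hx'] at this
    omega
  simp only [hdis, and_true]
  rw [Multiset.nodup_iff_count_le_one (s := Multiset.replicate _ _)]
  have hfac : ∀ a, Q a ≠ a → Q.cycleOf a ∈ Q.cycleFactorsFinset := by
    intro a ha
    rw [Equiv.Perm.cycleOf_mem_cycleFactorsFinset_iff, Equiv.Perm.mem_support]; exact ha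
  rw [Equiv.Perm.cycleType_def,
    Multiset.nodup_map_iff_inj_on Q.cycleFactorsFinset.nodup]
  constructor
  · rintro ⟨h1, h2⟩ a b ha hb hab
    by_cases hfa : Q a = a
    · have hfb : Q b = b := by rw [← per_eq_one_iff, ← hab, per_eq_one_iff.2 hfa]
      have h3 := h2 1
      rw [Multiset.count_replicate_self, Finset.card_le_one] at h3
      have : a = b := h3 a (by simp [ha, hfa]) b (by simp [hb, hfb])
      rw [this]
    · have hfb : Q b ≠ b := by rw [ne_eq, ← per_eq_one_iff, ← hab, per_eq_one_iff]; exact hfa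
      rw [per_eq_card hfa, per_eq_card hfb] at hab
      have h3 := h1 _ (hfac a hfa) _ (hfac b hfb) hab
      have h4 : b ∈ (Q.cycleOf b).support := by
        rw [Equiv.Perm.mem_support_cycleOf_iff]
        exact ⟨Equiv.Perm.SameCycle.refl _ _, by simpa using hfb⟩
      rw [← h3, Equiv.Perm.mem_support_cycleOf_iff] at h4
      exact h4.1
  · intro H
    constructor
    · intro c hc c' hc' hcc
      have hc0 : c ∈ Q.cycleFactorsFinset := hc
      have hc0' : c' ∈ Q.cycleFactorsFinset := hc'
      have key : ∀ c ∈ Q.cycleFactorsFinset, ∃ a, Q a ≠ a ∧ c = Q.cycleOf a := by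
        intro c hc
        have hcyc := (Equiv.Perm.mem_cycleFactorsFinset_iff.1 hc)
        obtain ⟨a, ha, _⟩ := hcyc.1
        have hm : a ∈ c.support := by simpa using ha
        refine ⟨a, ?_, Equiv.Perm.cycle_is_cycleOf hm hc⟩
        rw [← hcyc.2 a hm]; exact ha
      obtain ⟨a, ha, rfl⟩ := key c hc0
      obtain ⟨b, hb, rfl⟩ := key c' hc0'
      have := H a b (by rintro rfl; exact ha hX) (by rintro rfl; exact hb hX)
        (by rw [per_eq_card ha, per_eq_card hb]; exact hcc)
      exact this.cycleOf_eq
    · intro x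
      rw [Multiset.count_replicate]
      split_ifs with hx
      · rw [Finset.card_le_one]
        intro a ha b hb
        simp at ha hb
        have := H a b ha.1 hb.1 (by rw [per_eq_one_iff.2 ha.2, per_eq_one_iff.2 hb.2])
        exact this.eq_of_left ha.2
      · omega
end Lam

theorem final {A : Type*} [Fintype A] [DecidableEq A] [Nonempty A]
    (hN : 2 ≤ Fintype.card A) (π : RPair A) (hπ : PairIrreducible π)
    (S Q : Equiv.Perm A) (hS : IsS π S) (hQ : IsQ π S Q) :
    ((lamOf Q).Nodup →
      2 * (EClass π).ncard =
        Nat.factorial (Fintype.card A) * (nonlabeled '' EClass π).ncard) ∧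
    (¬ (lamOf Q).Nodup →
      (EClass π).ncard =
        Nat.factorial (Fintype.card A) * (nonlabeled '' EClass π).ncard) := by
  have : Nontrivial A := Fintype.one_lt_card_iff_nontrivial.1 hN
  have hsimp : (lamOf Q).Nodup ↔ Simp (toL π) := by
    rw [lam_iff hQ.1, Simp_iff hN hπ hS hQ]
  have hv := toL_valid π
  have hi := toL_irr hπ
  have h2 := part2 hv hi
  have hperm : Nat.card (Equiv.Perm A) = Nat.factorial (Fintype.card A) := by
    rw [Nat.card_perm, Nat.card_eq_fintype_card]
  rw [hsimp, card_E]
  constructor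
  · intro hs
    have : GG (toL π) = alternatingGroup A := by
      refine le_antisymm ?_ h2
      intro σ hσ
      rw [Equiv.Perm.mem_alternatingGroup]
      exact part1 hv hs σ hσ
    rw [this, ← mul_assoc, two_mul_nat_card_alternatingGroup, hperm]
  · intro hs
    obtain ⟨s, hs1, hs2⟩ := part3 hv hi hs
    have : GG (toL π) = ⊤ := by
      rw [eq_top_iff]
      intro σ _
      rcases Int.units_eq_one_or (Equiv.Perm.sign σ) with h | h
      · exact h2 (Equiv.Perm.mem_alternatingGroup.2 h)
      · have h3 : σ * s⁻¹ ∈ alternatingGroup A := by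
          rw [Equiv.Perm.mem_alternatingGroup, Equiv.Perm.sign_mul, Equiv.Perm.sign_inv, h, hs2]
          rfl
        have := (GG (toL π)).mul_mem (h2 h3) hs1
        rwa [inv_mul_cancel_right] at this
    rw [this, ← hperm]
    congr 1
    exact Nat.card_congr Subgroup.topEquiv.toEquiv
end RZ

/-- if `Λ(π)` is simple then `2·#E(π) = N!·#Ē(π)`;
if `Λ(π)` is not simple then `#E(π) = N!·#Ē(π)`. -/
theorem stmt0 {A : Type*} [Fintype A] [DecidableEq A] [Nonempty A]
    (hN : 2 ≤ Fintype.card A) (π : RPair A) (hπ : PairIrreducible π)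
    (S Q : Equiv.Perm A) (hS : IsS π S) (hQ : IsQ π S Q) :
    ((lamOf Q).Nodup →
      2 * (EClass π).ncard =
        Nat.factorial (Fintype.card A) * (nonlabeled '' EClass π).ncard) ∧
    (¬ (lamOf Q).Nodup →
      (EClass π).ncard =
        Nat.factorial (Fintype.card A) * (nonlabeled '' EClass π).ncard) := by
  exact RZ.final hN π hπ S Q hS hQ
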